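/- arXiv:2004.08496 — 11 statements merged into one kernel-verified Lean document; each statement's English description precedes it below -/
import Mathlib

section
/- Let X be a Hausdorff topological space and n ≥ 1 a natural number. If there exists a continuous selection on F_n(X), then for every natural number m with n ≤ m ≤ 2n such that m is not a prime number, there exists a continuous selection on [X]^m. -/
/-!
Let `m ≤ 2n` be composite and let `p` be a prime divisor of `m`; then `p ≤ m / 2 ≤ n`. Given an
`m`-element set `s`, count for each `x ∈ s` the `p`-element subsets of `s` from which `f` selects
`x`. These counts add up to `C(m, p)`, which is not divisible by `m` (`not_dvd_choose`, from Lucas'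
theorem), so they are not all equal. Hence the set of points of minimal count is a nonempty proper
subset of `s`, and either it or its complement in `s` has at most `m / 2 ≤ n` elements. Applying
`f` to that part selects a point of `s` (`gsel_mem`).

The recipe depends only on the values of `f` on nonempty subsets of `s` with at most `n` elements
and is invariant under bijections (`gsel_map`). By continuity of `f` and the Hausdorff property, the
pattern of those values does not change when the points of `s` move slightly (`exists_pattern`), so
the selected point keeps its index, which is continuity of the new selection.
-/

/-- `f` is a selection on `[X]^n`: it assigns to each `n`-element subset one of its points. -/
def SelOn {X : Type*} (n : ℕ) (f : Finset X → X) : Prop :=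
  ∀ s : Finset X, s.card = n → f s ∈ s

/-- `f` is a continuous selection on `[X]^n`. -/
def ContSelOn {X : Type*} [TopologicalSpace X] [DecidableEq X] (n : ℕ)
    (f : Finset X → X) : Prop :=
  SelOn n f ∧
  ∀ x : Fin n → X, Function.Injective x →
    ∃ U : Fin n → Set X,
      (∀ i, IsOpen (U i)) ∧ (∀ i, x i ∈ U i) ∧
      Pairwise (fun i j => Disjoint (U i) (U j)) ∧
      ∃ j : Fin n, ∀ y : Fin n → X, (∀ i, y i ∈ U i) →
        f (Finset.image y Finset.univ) ∈ U j

/-- `f` is a selection on `F_n(X)`, the nonempty subsets of size at most `n`. -/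
def SelOnLE {X : Type*} (n : ℕ) (f : Finset X → X) : Prop :=
  ∀ s : Finset X, s.Nonempty → s.card ≤ n → f s ∈ s

/-- `f` is a continuous selection on `F_n(X)`. -/
def ContSelOnLE {X : Type*} [TopologicalSpace X] (n : ℕ) (f : Finset X → X) : Prop :=
  SelOnLE n f ∧
  ∀ s : Finset X, s.Nonempty → s.card ≤ n →
    ∀ V : Set X, IsOpen V → f s ∈ V →
      ∃ U : X → Set X,
        (∀ x ∈ s, IsOpen (U x)) ∧ (∀ x ∈ s, x ∈ U x) ∧
        ((s : Set X).Pairwise fun x y => Disjoint (U x) (U y)) ∧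
        ∀ B : Finset X, B.Nonempty → B.card ≤ n →
          ((B : Set X) ⊆ ⋃ x ∈ s, U x) → (∀ x ∈ s, ∃ b ∈ B, b ∈ U x) → f B ∈ V

/-- The number of `p`-element subsets of `s` from which `f` selects `x`. -/
def selCount {α : Type*} [DecidableEq α] (p : ℕ) (f : Finset α → α) (s : Finset α) (x : α) : ℕ :=
  ((s.powersetCard p).filter fun t => f t = x).card

/-- The points of `s` that are selected least often from `p`-element subsets of `s`. -/
def minPart {α : Type*} [DecidableEq α] (p : ℕ) (f : Finset α → α) (s : Finset α) : Finset α :=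
  s.filter fun x => ∀ y ∈ s, selCount p f s x ≤ selCount p f s y

/-- The set of least selected points if it has at most `n` elements, its complement in `s`
otherwise. -/
def smallPart {α : Type*} [DecidableEq α] (n p : ℕ) (f : Finset α → α) (s : Finset α) : Finset α :=
  if (minPart p f s).card ≤ n then minPart p f s else s \ minPart p f s

/-- The selection derived from `f`: the point that `f` selects from `smallPart n p f s`. -/
def gsel {α : Type*} [DecidableEq α] (n p : ℕ) (f : Finset α → α) (s : Finset α) : α :=
  f (smallPart n p f s)

lemma not_dvd_choose {m p : ℕ} (hm : 1 ≤ m) (hp : p.Prime) (hpm : p ∣ m) : ¬ m ∣ m.choose p := by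
  rintro ⟨c, hc⟩
  obtain ⟨q, rfl⟩ : ∃ q, p = q + 1 := ⟨p - 1, by have := hp.pos; omega⟩
  obtain ⟨k, rfl⟩ : ∃ k, m = k + 1 := ⟨m - 1, by omega⟩
  have h1 := Nat.add_one_mul_choose_eq k q
  rw [hc, mul_assoc] at h1
  have h2 : k.choose q = c * (q + 1) := Nat.eq_of_mul_eq_mul_left (Nat.succ_pos k) h1
  have : Fact (q + 1).Prime := ⟨hp⟩
  have h3 := Choose.choose_modEq_choose_mod_mul_choose_div_nat (n := k) (k := q) (p := q + 1)
  -- `k ≡ -1` modulo `p = q + 1`, so Lucas' theorem gives `C(k, q) ≡ 1`.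
  have hk : k % (q + 1) = q := by
    obtain ⟨d, hd⟩ := hpm
    obtain ⟨e, rfl⟩ : ∃ e, d = e + 1 := ⟨d - 1, by
      rcases d with _ | d
      · simp at hd
      · simp⟩
    have : k = q + (q + 1) * e := by
      have : k + 1 = (q + 1) * e + (q + 1) := by rw [hd]; ring
      omega
    rw [this, Nat.add_mul_mod_self_left, Nat.mod_eq_of_lt (Nat.lt_succ_self q)]
  rw [hk, Nat.mod_eq_of_lt (Nat.lt_succ_self q), Nat.div_eq_of_lt (Nat.lt_succ_self q),
    Nat.choose_self, Nat.choose_zero_right, mul_one, h2] at h3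
  have h4 : (q + 1) ∣ 1 := (Nat.ModEq.dvd_iff h3 dvd_rfl).1 (Dvd.intro_left c rfl)
  exact hp.one_lt.ne' (Nat.dvd_one.1 h4)

lemma smallPart_spec {α : Type*} [DecidableEq α] {n p : ℕ} {f : Finset α → α} {s : Finset α}
    (hf : ∀ t : Finset α, t.Nonempty → t.card ≤ n → f t ∈ t)
    (hp : p.Prime) (hpn : p ≤ n) (hps : p ∣ s.card) (hs : 1 ≤ s.card) (hsn : s.card ≤ 2 * n) :
    (smallPart n p f s).Nonempty ∧ (smallPart n p f s).card ≤ n ∧ smallPart n p f s ⊆ s := by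
  have hsub : minPart p f s ⊆ s := Finset.filter_subset _ _
  have hne : (minPart p f s).Nonempty := by
    obtain ⟨x, hx, hmin⟩ := Finset.exists_min_image s (selCount p f s) (Finset.card_pos.1 hs)
    exact ⟨x, Finset.mem_filter.2 ⟨hx, hmin⟩⟩
  have hproper : minPart p f s ≠ s := by
    intro h
    obtain ⟨x₀, hx₀⟩ := Finset.card_pos.1 hs
    have hall : ∀ x ∈ s, selCount p f s x = selCount p f s x₀ := by
      intro x hx
      have h1 := (Finset.mem_filter.1 (h.symm ▸ hx : x ∈ minPart p f s)).2 x₀ hx₀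
      have h2 := (Finset.mem_filter.1 (h.symm ▸ hx₀ : x₀ ∈ minPart p f s)).2 x hx
      omega
    have hmaps : ∀ t ∈ s.powersetCard p, f t ∈ s := by
      intro t ht
      obtain ⟨hts, htc⟩ := Finset.mem_powersetCard.1 ht
      exact hts (hf t (Finset.card_pos.1 (htc ▸ hp.pos)) (htc ▸ hpn))
    have hsum := Finset.card_eq_sum_card_fiberwise hmaps
    rw [Finset.card_powersetCard] at hsum
    have hsum' : s.card.choose p = ∑ x ∈ s, selCount p f s x := hsum
    rw [Finset.sum_congr rfl hall, Finset.sum_const, smul_eq_mul] at hsum'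
    exact not_dvd_choose hs hp hps ⟨_, hsum'⟩
  unfold smallPart
  split_ifs with hc
  · exact ⟨hne, hc, hsub⟩
  · refine ⟨?_, ?_, Finset.sdiff_subset⟩
    · exact Finset.sdiff_nonempty.2 fun h => hproper (hsub.antisymm h)
    · rw [Finset.card_sdiff_of_subset hsub]
      omega

lemma gsel_mem {α : Type*} [DecidableEq α] {n p : ℕ} {f : Finset α → α} {s : Finset α}
    (hf : ∀ t : Finset α, t.Nonempty → t.card ≤ n → f t ∈ t)
    (hp : p.Prime) (hpn : p ≤ n) (hps : p ∣ s.card) (hs : 1 ≤ s.card) (hsn : s.card ≤ 2 * n) :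
    gsel n p f s ∈ s := by
  obtain ⟨h1, h2, h3⟩ := smallPart_spec hf hp hpn hps hs hsn
  exact h3 (hf _ h1 h2)

section Transport

variable {α β : Type*} [DecidableEq α] [DecidableEq β] {n p : ℕ} {f : Finset α → α}
  {f' : Finset β → β} {e : α ↪ β}

lemma selCount_map (hfe : ∀ t : Finset α, t.Nonempty → t.card ≤ n → f' (t.map e) = e (f t))
    (hp : 0 < p) (hpn : p ≤ n) (s : Finset α) (x : α) :
    selCount p f' (s.map e) (e x) = selCount p f s x := by
  unfold selCount
  rw [Finset.powersetCard_map, Finset.filter_map, Finset.card_map]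
  congr 1
  apply Finset.filter_congr
  intro t ht
  have htc := (Finset.mem_powersetCard.1 ht).2
  have := hfe t (Finset.card_pos.1 (htc ▸ hp)) (htc ▸ hpn)
  simp [Finset.mapEmbedding_apply, this]

lemma smallPart_map (hfe : ∀ t : Finset α, t.Nonempty → t.card ≤ n → f' (t.map e) = e (f t))
    (hp : 0 < p) (hpn : p ≤ n) (s : Finset α) :
    smallPart n p f' (s.map e) = (smallPart n p f s).map e := by
  have hmin : minPart p f' (s.map e) = (minPart p f s).map e := by
    unfold minPart
    rw [Finset.filter_map]
    congr 1
    apply Finset.filter_congr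
    intro x _
    simp [selCount_map hfe hp hpn]
  unfold smallPart
  rw [hmin, Finset.card_map]
  split_ifs
  · rfl
  · rw [Finset.map_eq_image, Finset.map_eq_image, Finset.map_eq_image,
      Finset.image_sdiff _ _ e.injective]

/-- If `e` intertwines `f` and `f'` on the nonempty sets with at most `n` elements, then it
intertwines the derived selections. -/
lemma gsel_map (hf : ∀ t : Finset α, t.Nonempty → t.card ≤ n → f t ∈ t)
    (hfe : ∀ t : Finset α, t.Nonempty → t.card ≤ n → f' (t.map e) = e (f t))
    (hp : p.Prime) (hpn : p ≤ n) {s : Finset α} (hps : p ∣ s.card) (hs : 1 ≤ s.card)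
    (hsn : s.card ≤ 2 * n) : gsel n p f' (s.map e) = e (gsel n p f s) := by
  obtain ⟨h1, h2, -⟩ := smallPart_spec hf hp hpn hps hs hsn
  unfold gsel
  rw [smallPart_map hfe hp.pos hpn, hfe _ h1 h2]

end Transport

/-- Around distinct points `x i` there are disjoint open sets `W i` such that, for every nonempty
index set `T` of size at most `n`, `f` selects from `{y i | i ∈ T}` a point of the same index `J T`
for all choices of `y i ∈ W i`. -/
lemma exists_pattern {X : Type*} [TopologicalSpace X] [T2Space X] [DecidableEq X] {n m : ℕ}
    [NeZero m] {f : Finset X → X} (hf : ContSelOnLE n f) {x : Fin m → X} (hx : Function.Injective x) :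
    ∃ (W : Fin m → Set X) (J : Finset (Fin m) → Fin m),
      (∀ i, IsOpen (W i)) ∧ (∀ i, x i ∈ W i) ∧ Pairwise (fun i j => Disjoint (W i) (W j)) ∧
      ∀ T : Finset (Fin m), T.Nonempty → T.card ≤ n → J T ∈ T ∧
        ∀ y : Fin m → X, (∀ i, y i ∈ W i) → f (T.image y) = y (J T) := by
  obtain ⟨D, hD, hDdisj⟩ : ∃ D : Fin m → Set X, (∀ i, x i ∈ D i ∧ IsOpen (D i)) ∧
      Pairwise (fun i j => Disjoint (D i) (D j)) := by
    obtain ⟨D, hD, hd⟩ := (Set.toFinite (Set.range x)).t2_separation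
    exact ⟨fun i => D (x i), fun i => hD (x i), fun i j hij =>
      hd (Set.mem_range_self i) (Set.mem_range_self j) (hx.ne hij)⟩
  have key : ∀ T : Finset (Fin m), ∃ (j : Fin m) (U : Fin m → Set X),
      (∀ i, IsOpen (U i)) ∧ (∀ i, x i ∈ U i) ∧ (T.Nonempty → T.card ≤ n → j ∈ T ∧
        ∀ y : Fin m → X, (∀ i, y i ∈ U i ∩ D i) → f (T.image y) = y j) := by
    intro T
    by_cases hT : T.Nonempty ∧ T.card ≤ n
    · obtain ⟨hne, hcard⟩ := hT
      have hcard' : (T.image x).card ≤ n := Finset.card_image_le.trans hcard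
      obtain ⟨j, hjT, hj⟩ := Finset.mem_image.1 (hf.1 _ (hne.image x) hcard')
      obtain ⟨U, hUo, hUx, -, hU⟩ := hf.2 _ (hne.image x) hcard' (D j) (hD j).2
        (hj ▸ (hD j).1)
      refine ⟨j, fun i => if i ∈ T then U (x i) else Set.univ, ?_, ?_, fun _ _ => ⟨hjT, ?_⟩⟩
      · intro i
        dsimp only
        split_ifs with hi
        · exact hUo _ (Finset.mem_image_of_mem x hi)
        · exact isOpen_univ
      · intro i
        dsimp only
        split_ifs with hi
        · exact hUx _ (Finset.mem_image_of_mem x hi)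
        · trivial
      · intro y hy
        have hyU : ∀ i ∈ T, y i ∈ U (x i) := by
          intro i hi
          have := (hy i).1
          simpa [hi] using this
        have hyc : (T.image y).card ≤ n := Finset.card_image_le.trans hcard
        have hmem : f (T.image y) ∈ D j := by
          refine hU _ (hne.image y) hyc ?_ ?_
          · intro b hb
            obtain ⟨i, hi, rfl⟩ := Finset.mem_image.1 (Finset.mem_coe.1 hb)
            exact Set.mem_biUnion (Finset.mem_image_of_mem x hi) (hyU i hi)
          · intro z hz
            obtain ⟨i, hi, rfl⟩ := Finset.mem_image.1 hz
            exact ⟨y i, Finset.mem_image_of_mem y hi, hyU i hi⟩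
        obtain ⟨k, _, hk⟩ := Finset.mem_image.1 (hf.1 _ (hne.image y) hyc)
        by_cases hkj : k = j
        · rw [← hk, hkj]
        · exact (Set.disjoint_left.1 (hDdisj hkj) (hy k).2 (hk ▸ hmem)).elim
    · exact ⟨0, fun _ => Set.univ, fun _ => isOpen_univ, fun _ => trivial,
        fun h1 h2 => (hT ⟨h1, h2⟩).elim⟩
  choose J U hUo hUx hU using key
  refine ⟨fun i => D i ∩ ⋂ T, U T i, J, ?_, ?_, ?_, ?_⟩
  · exact fun i => (hD i).2.inter (isOpen_iInter_of_finite fun T => hUo T i)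
  · exact fun i => ⟨(hD i).1, Set.mem_iInter.2 fun T => hUx T i⟩
  · exact fun i j hij => (hDdisj hij).mono Set.inter_subset_left Set.inter_subset_left
  · intro T h1 h2
    exact ⟨(hU T h1 h2).1, fun y hy => (hU T h1 h2).2 y fun i =>
      ⟨Set.mem_iInter.1 (hy i).2 T, (hy i).1⟩⟩

/-- If a Hausdorff space `X` admits a continuous selection on `F_n(X)`
(`n ≥ 1`), then for every `m` with `n ≤ m ≤ 2n` which is not prime, `X` admits a
continuous selection on `[X]^m`. -/
theorem statement0 {X : Type*} [TopologicalSpace X] [T2Space X] [DecidableEq X]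
    (n : ℕ) (hn : 1 ≤ n)
    (hsel : ∃ f : Finset X → X, ContSelOnLE n f) :
    ∀ m : ℕ, n ≤ m → m ≤ 2 * n → ¬ m.Prime →
      ∃ g : Finset X → X, ContSelOn m g := by
  intro m hnm hm2 hmp
  obtain ⟨f, hf⟩ := hsel
  by_cases hm1 : m = 1
  · subst hm1
    refine ⟨f, fun s hs => hf.1 s (Finset.card_pos.1 (by omega)) (by omega), fun x _ => ?_⟩
    exact ⟨fun _ => Set.univ, fun _ => isOpen_univ, fun _ => trivial,
      fun i j hij => (hij (Subsingleton.elim i j)).elim, 0, fun _ _ => trivial⟩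
  have hp := Nat.minFac_prime hm1
  have hpm := Nat.minFac_dvd m
  set p := m.minFac
  have hpn : p ≤ n := by
    obtain ⟨d, hd⟩ := hpm
    have hd2 : 2 ≤ d := by
      rcases d with _ | _ | d
      · omega
      · exact (hmp (by rw [hd, zero_add, mul_one]; exact hp)).elim
      · omega
    nlinarith
  refine ⟨gsel n p f, fun s hs =>
    gsel_mem hf.1 hp hpn (hs ▸ hpm) (by omega) (by omega), fun x hx => ?_⟩
  have : NeZero m := ⟨by omega⟩
  obtain ⟨W, J, hWo, hWx, hWd, hJ⟩ := exists_pattern hf hx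
  refine ⟨W, hWo, hWx, hWd, gsel n p J Finset.univ, fun y hy => ?_⟩
  have hyinj : Function.Injective y := by
    intro i j hij
    by_contra hne
    exact Set.disjoint_left.1 (hWd hne) (hy i) (hij ▸ hy j)
  have hcard : (Finset.univ : Finset (Fin m)).card = m := by simp
  have := gsel_map (f := J) (f' := f) (e := ⟨y, hyinj⟩) (p := p)
    (fun t h1 h2 => (hJ t h1 h2).1)
    (fun t h1 h2 => by
      rw [Finset.map_eq_image]
      exact (hJ t h1 h2).2 y hy)
    hp hpn (s := Finset.univ) (hcard.symm ▸ hpm) (by omega) (by omega)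
  rw [Finset.map_eq_image] at this
  have h2 : gsel n p f (Finset.image y Finset.univ) = y (gsel n p J Finset.univ) := this
  rw [h2]
  exact hy _
end

section
/- Let X be a Hausdorff topological space, p a prime number, and k, m natural numbers with m ≥ 1, p ≤ k, m ≤ 2k, and p dividing m. If there exists a continuous selection on F_k(X), then there exists a continuous selection on [X]^m. -/
/-- The number of `p`-element subsets `t` of `s` with `f t = x`. -/
def votes {α : Type*} [DecidableEq α] (p : ℕ) (f : Finset α → α) (s : Finset α) (x : α) : ℕ :=
  ((s.powersetCard p).filter (fun t => f t = x)).card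

/-- The points of `s` with the largest number of votes. -/
def winners {α : Type*} [DecidableEq α] (p : ℕ) (f : Finset α → α) (s : Finset α) : Finset α :=
  s.filter (fun x => ∀ y ∈ s, votes p f s y ≤ votes p f s x)

/-- The winners if they make up at most half of `s`, and otherwise the remaining points of `s`. -/
def halfPart {α : Type*} [DecidableEq α] (p : ℕ) (f : Finset α → α) (s : Finset α) : Finset α :=
  if 2 * (winners p f s).card ≤ s.card then winners p f s else s \ winners p f s

/-- Writing `m = p * q`, one has `m.choose p = q * (m - 1).choose (p - 1)`, and by Lucas the last
factor is congruent to `1` modulo `p`. -/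
lemma not_dvd_choose_of_prime_dvd {p m : ℕ} (hp : p.Prime) (hm : 1 ≤ m) (h : p ∣ m) :
    ¬ m ∣ m.choose p := by
  have : Fact p.Prime := ⟨hp⟩
  obtain ⟨q, rfl⟩ := h
  have hp0 := hp.pos
  have hp1 := hp.one_lt
  obtain ⟨r, rfl⟩ : ∃ r, q = r + 1 := by
    cases q with
    | zero => simp at hm
    | succ r => exact ⟨r, rfl⟩
  have e1 : p * (r + 1) = (p - 1 + p * r) + 1 := by
    rw [Nat.mul_succ]; omega
  have e2 : p = (p - 1) + 1 := by omega
  have hid : p * (r + 1) * (p - 1 + p * r).choose (p - 1) = (p * (r + 1)).choose p * p := by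
    have := Nat.add_one_mul_choose_eq (p - 1 + p * r) (p - 1)
    rwa [← e1, ← e2] at this
  rintro ⟨c, hc⟩
  rw [hc] at hid
  have hC : (p - 1 + p * r).choose (p - 1) = c * p := by
    have : 0 < p * (r + 1) := hm
    apply Nat.eq_of_mul_eq_mul_left this
    rw [hid]; ring
  have hl := Choose.choose_modEq_choose_mod_mul_choose_div_nat
    (p := p) (n := p - 1 + p * r) (k := p - 1)
  have a1 : (p - 1 + p * r) % p = p - 1 := by
    rw [Nat.add_mul_mod_self_left, Nat.mod_eq_of_lt (by omega)]
  have a2 : (p - 1) % p = p - 1 := Nat.mod_eq_of_lt (by omega)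
  have a3 : (p - 1) / p = 0 := Nat.div_eq_of_lt (by omega)
  rw [a1, a2, a3, hC] at hl
  simp only [Nat.choose_self, Nat.choose_zero_right, mul_one] at hl
  have : p ∣ 1 := (hl.dvd_iff (dvd_refl p)).1 (dvd_mul_left p c)
  exact hp.one_lt.ne' (Nat.dvd_one.1 this)

lemma winners_subset {α : Type*} [DecidableEq α] (p : ℕ) (f : Finset α → α) (s : Finset α) :
    winners p f s ⊆ s := Finset.filter_subset _ _

lemma halfPart_subset {α : Type*} [DecidableEq α] (p : ℕ) (f : Finset α → α) (s : Finset α) :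
    halfPart p f s ⊆ s := by
  unfold halfPart
  split_ifs
  · exact winners_subset p f s
  · exact Finset.sdiff_subset

lemma winners_nonempty {α : Type*} [DecidableEq α] (p : ℕ) (f : Finset α → α) {s : Finset α}
    (hs : s.Nonempty) : (winners p f s).Nonempty := by
  obtain ⟨x, hx, h⟩ := Finset.exists_max_image s (votes p f s) hs
  exact ⟨x, Finset.mem_filter.2 ⟨hx, h⟩⟩

lemma winners_ne {α : Type*} [DecidableEq α] {p k : ℕ} {f : Finset α → α} (hf : SelOnLE k f)
    (hp : p.Prime) (hpk : p ≤ k) {s : Finset α} (hs : s.Nonempty) (hd : p ∣ s.card) :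
    winners p f s ≠ s := by
  intro h
  obtain ⟨a, ha⟩ := hs
  apply not_dvd_choose_of_prime_dvd hp (Finset.card_pos.2 ⟨a, ha⟩) hd
  have hmax : ∀ x ∈ s, ∀ y ∈ s, votes p f s y ≤ votes p f s x := by
    intro x hx
    rw [← h] at hx
    exact (Finset.mem_filter.1 hx).2
  have hsum : (s.powersetCard p).card = ∑ x ∈ s, votes p f s x := by
    apply Finset.card_eq_sum_card_fiberwise
    intro t ht
    have ht' := Finset.mem_powersetCard.1 (Finset.mem_coe.1 ht)
    refine Finset.mem_coe.2 (ht'.1 (hf t (Finset.card_pos.1 ?_) ?_))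
    · rw [ht'.2]; exact hp.pos
    · rw [ht'.2]; exact hpk
  rw [Finset.card_powersetCard,
    Finset.sum_congr rfl (fun x hx => le_antisymm (hmax a ha x hx) (hmax x hx a ha)),
    Finset.sum_const, smul_eq_mul] at hsum
  exact ⟨_, hsum⟩

lemma halfPart_nonempty {α : Type*} [DecidableEq α] {p k : ℕ} {f : Finset α → α}
    (hf : SelOnLE k f) (hp : p.Prime) (hpk : p ≤ k) {s : Finset α} (hs : s.Nonempty)
    (hd : p ∣ s.card) : (halfPart p f s).Nonempty := by
  unfold halfPart
  split_ifs
  · exact winners_nonempty p f hs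
  · rw [Finset.sdiff_nonempty]
    exact fun h => winners_ne hf hp hpk hs hd ((winners_subset p f s).antisymm h)

lemma two_mul_card_halfPart_le {α : Type*} [DecidableEq α] (p : ℕ) (f : Finset α → α)
    (s : Finset α) : 2 * (halfPart p f s).card ≤ s.card := by
  unfold halfPart
  split_ifs with h
  · exact h
  · rw [Finset.card_sdiff_of_subset (winners_subset p f s)]
    omega

/-- If `f` corresponds to `φ` under the embedding `e` on `p`-element sets, then so do the
associated small parts. -/
lemma halfPart_map {ι α : Type*} [DecidableEq ι] [DecidableEq α] {p : ℕ} {f : Finset α → α}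
    {φ : Finset ι → ι} (e : ι ↪ α) (h : ∀ T : Finset ι, T.card = p → f (T.map e) = e (φ T))
    (s : Finset ι) : halfPart p f (s.map e) = (halfPart p φ s).map e := by
  have hv : ∀ i, votes p f (s.map e) (e i) = votes p φ s i := by
    intro i
    unfold votes
    rw [Finset.powersetCard_map, Finset.filter_map, Finset.card_map]
    congr 1
    apply Finset.filter_congr
    intro T hT
    have := h T (Finset.mem_powersetCard.1 hT).2
    simp [Finset.mapEmbedding_apply, this]
  have hw : winners p f (s.map e) = (winners p φ s).map e := by
    unfold winners
    rw [Finset.filter_map]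
    congr 1
    apply Finset.filter_congr
    intro i _
    simp [hv]
  unfold halfPart
  rw [hw, Finset.card_map, Finset.card_map, ← Finset.map_sdiff]
  split_ifs <;> rfl

/-- Around distinct points `x i` there are disjoint neighbourhoods `U i` on which a continuous
selection on `F_k(X)` follows a fixed rule `φ` on indices: from the points `y i` with `i ∈ T` it
selects `y (φ T)`. -/
lemma exists_pattern_nhds {X : Type*} [TopologicalSpace X] [T2Space X] [DecidableEq X]
    {k m : ℕ} (hm : 1 ≤ m) {f : Finset X → X} (hf : ContSelOnLE k f) (x : Fin m → X)
    (hx : Function.Injective x) :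
    ∃ (U : Fin m → Set X) (φ : Finset (Fin m) → Fin m),
      (∀ i, IsOpen (U i)) ∧ (∀ i, x i ∈ U i) ∧ Pairwise (fun i j => Disjoint (U i) (U j)) ∧
      ∀ y : Fin m → X, (∀ i, y i ∈ U i) →
        ∀ T : Finset (Fin m), T.Nonempty → T.card ≤ k → f (T.image y) = y (φ T) := by
  obtain ⟨hsel, hcont⟩ := hf
  have hW : ∃ W : Fin m → Set X, (∀ i, IsOpen (W i)) ∧ (∀ i, x i ∈ W i) ∧
      Pairwise (fun i j => Disjoint (W i) (W j)) := by
    obtain ⟨V, hV, hd⟩ := (Set.toFinite (Set.range x)).t2_separation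
    exact ⟨fun i => V (x i), fun i => (hV _).2, fun i => (hV _).1,
      fun i j hij => hd (Set.mem_range_self i) (Set.mem_range_self j) (hx.ne hij)⟩
  obtain ⟨W, hWo, hxW, hWd⟩ := hW
  have key : ∀ T : Finset (Fin m), ∃ (j : Fin m) (N : Fin m → Set X),
      (∀ i, IsOpen (N i)) ∧ (∀ i, x i ∈ N i) ∧
      (T.Nonempty → T.card ≤ k →
        ∀ y : Fin m → X, (∀ i, y i ∈ N i) → f (T.image y) ∈ W j) := by
    intro T
    by_cases hT : T.Nonempty ∧ T.card ≤ k
    · obtain ⟨hT0, hTk⟩ := hT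
      have hmem := hsel (T.image x) (hT0.image x) (Finset.card_image_le.trans hTk)
      obtain ⟨j, -, hj⟩ := Finset.mem_image.1 hmem
      obtain ⟨N, hNo, hxN, -, hN⟩ := hcont (T.image x) (hT0.image x)
        (Finset.card_image_le.trans hTk) (W j) (hWo j) (hj ▸ hxW j)
      refine ⟨j, fun i => if i ∈ T then N (x i) else Set.univ, ?_, ?_, ?_⟩
      · intro i
        dsimp only
        split_ifs with hi
        · exact hNo _ (Finset.mem_image_of_mem x hi)
        · exact isOpen_univ
      · intro i
        dsimp only
        split_ifs with hi
        · exact hxN _ (Finset.mem_image_of_mem x hi)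
        · trivial
      · intro _ _ y hy
        have hy' : ∀ i ∈ T, y i ∈ N (x i) := by
          intro i hi
          simpa [hi] using hy i
        apply hN _ (hT0.image y) (Finset.card_image_le.trans hTk)
        · intro b hb
          obtain ⟨i, hi, rfl⟩ := Finset.mem_image.1 (Finset.mem_coe.1 hb)
          exact Set.mem_biUnion (Finset.mem_image_of_mem x hi) (hy' i hi)
        · intro z hz
          obtain ⟨i, hi, rfl⟩ := Finset.mem_image.1 hz
          exact ⟨y i, Finset.mem_image_of_mem y hi, hy' i hi⟩
    · exact ⟨⟨0, hm⟩, fun _ => Set.univ, fun _ => isOpen_univ, fun _ => trivial,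
        fun h1 h2 => absurd ⟨h1, h2⟩ hT⟩
  choose φ N hNo hxN hN using key
  refine ⟨fun i => W i ∩ ⋂ T, N T i, φ, ?_, ?_, ?_, ?_⟩
  · exact fun i => (hWo i).inter (isOpen_iInter_of_finite fun T => hNo T i)
  · exact fun i => ⟨hxW i, Set.mem_iInter.2 fun T => hxN T i⟩
  · exact fun i j hij => (hWd hij).mono Set.inter_subset_left Set.inter_subset_left
  · intro y hy T hT0 hTk
    have h1 := hN T hT0 hTk y (fun i => Set.mem_iInter.1 (hy i).2 T)
    obtain ⟨i, -, hi⟩ := Finset.mem_image.1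
      (hsel (T.image y) (hT0.image y) (Finset.card_image_le.trans hTk))
    have hij : i = φ T := by
      by_contra hne
      exact Set.disjoint_left.1 (hWd hne) (hy i).1 (hi ▸ h1)
    rw [← hi, hij]

/-- If `p` is prime, `m ≥ 1`, `p ≤ k`, `m ≤ 2k`, `p ∣ m`, and the Hausdorff
space `X` admits a continuous selection on `F_k(X)`, then `X` admits a continuous
selection on `[X]^m`. -/
theorem statement1 {X : Type*} [TopologicalSpace X] [T2Space X] [DecidableEq X]
    (p k m : ℕ) (hp : p.Prime) (hm : 1 ≤ m) (hpk : p ≤ k) (hmk : m ≤ 2 * k)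
    (hdvd : p ∣ m)
    (hsel : ∃ f : Finset X → X, ContSelOnLE k f) :
    ∃ g : Finset X → X, ContSelOn m g := by
  obtain ⟨f, hf⟩ := hsel
  have hne : ∀ s : Finset X, s.card = m → (halfPart p f s).Nonempty := fun s hs =>
    halfPart_nonempty hf.1 hp hpk (Finset.card_pos.1 (by omega)) (hs ▸ hdvd)
  have hle : ∀ s : Finset X, s.card = m → (halfPart p f s).card ≤ k := fun s hs => by
    have := two_mul_card_halfPart_le p f s
    omega
  refine ⟨fun s => f (halfPart p f s), fun s hs =>
    halfPart_subset p f s (hf.1 _ (hne s hs) (hle s hs)), ?_⟩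
  intro x hx
  obtain ⟨U, φ, hUo, hxU, hUd, hU⟩ := exists_pattern_nhds hm hf x hx
  refine ⟨U, hUo, hxU, hUd, φ (halfPart p φ Finset.univ), ?_⟩
  intro y hy
  have hinj : Function.Injective y := by
    intro i j hij
    by_contra hne
    exact Set.disjoint_left.1 (hUd hne) (hy i) (hij ▸ hy j)
  let e : Fin m ↪ X := ⟨y, hinj⟩
  have himg : ∀ T : Finset (Fin m), T.image y = T.map e := fun T =>
    (Finset.map_eq_image e T).symm
  have hmap : halfPart p f (Finset.univ.map e) = (halfPart p φ Finset.univ).map e := by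
    refine halfPart_map e (fun T hT => ?_) Finset.univ
    rw [← himg]
    exact hU y hy T (Finset.card_pos.1 (hT ▸ hp.pos)) (hT.trans_le hpk)
  have hcard : (Finset.univ.map e).card = m := by simp
  have h1 := hne _ hcard
  have h2 := hle _ hcard
  rw [hmap] at h1 h2
  rw [Finset.card_map] at h2
  dsimp only
  rw [himg, hmap, ← himg, hU y hy _ (Finset.map_nonempty.1 h1) h2]
  exact hy _
end

section
/- Let X be a Hausdorff topological space and n ≥ 2 a natural number such that n + 1 is not a prime number. If there exists a continuous selection on F_n(X), then there exists a continuous selection on [X]^{n+1}. -/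
/-- The number of `p`-element subsets of `s` from which `f` chooses `x`. -/
def score {α : Type*} [DecidableEq α] (f : Finset α → α) (p : ℕ) (s : Finset α) (x : α) : ℕ :=
  ((s.powersetCard p).filter (fun A => f A = x)).card

/-- The points of `s` whose score is maximal among the points of `s`. -/
def topScorers {α : Type*} [DecidableEq α] (f : Finset α → α) (p : ℕ) (s : Finset α) : Finset α :=
  s.filter (fun x => ∀ z ∈ s, score f p s z ≤ score f p s x)

lemma topScorers_nonempty {α : Type*} [DecidableEq α] (f : Finset α → α) (p : ℕ) (s : Finset α)
    (hs : s.Nonempty) : (topScorers f p s).Nonempty := by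
  obtain ⟨x, hx, h⟩ := s.exists_max_image (score f p s) hs
  exact ⟨x, Finset.mem_filter.2 ⟨hx, h⟩⟩

lemma not_dvd_choose_pred (N p : ℕ) (hp : p.Prime) (hN : 0 < N) (hpN : p ∣ N) :
    ¬ p ∣ (N - 1).choose (p - 1) := by
  have : Fact p.Prime := ⟨hp⟩
  have hp2 := hp.two_le
  obtain ⟨k, rfl⟩ := hpN
  have hk : 0 < k := Nat.pos_of_mul_pos_left hN
  obtain ⟨k, rfl⟩ := Nat.exists_eq_succ_of_ne_zero hk.ne'
  have e : p * (k + 1) - 1 = p - 1 + p * k := by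
    rw [Nat.mul_succ]; omega
  have h := Choose.choose_modEq_choose_mod_mul_choose_div_nat
    (p := p) (n := p * (k + 1) - 1) (k := p - 1)
  have h1 : (p * (k + 1) - 1) % p = p - 1 := by
    rw [e, Nat.add_mul_mod_self_left]
    exact Nat.mod_eq_of_lt (by omega)
  have h2 : (p - 1) % p = p - 1 := Nat.mod_eq_of_lt (by omega)
  have h3 : (p - 1) / p = 0 := Nat.div_eq_of_lt (by omega)
  rw [h1, h2, h3, Nat.choose_self, Nat.choose_zero_right] at h
  intro hd
  have h4 : p ∣ 1 := (h.dvd_iff dvd_rfl).1 hd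
  exact hp.one_lt.ne' (Nat.dvd_one.1 h4)

/-- If all scores were equal, they would equal `N.choose p / N`, which is not an integer. -/
lemma topScorers_card_lt {α : Type*} [DecidableEq α] (f : Finset α → α) (p : ℕ) (s : Finset α)
    (hp : p.Prime) (hs : s.Nonempty) (hps : p ∣ s.card)
    (hf : ∀ A ⊆ s, A.card = p → f A ∈ A) : (topScorers f p s).card < s.card := by
  refine Finset.card_lt_card ((Finset.filter_subset _ _).ssubset_of_ne fun heq => ?_)
  have hmax : ∀ x ∈ s, ∀ z ∈ s, score f p s z ≤ score f p s x := fun x hx => by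
    rw [← heq] at hx
    exact (Finset.mem_filter.1 hx).2
  obtain ⟨a, ha⟩ := hs
  have hsum : (s.powersetCard p).card = ∑ x ∈ s, score f p s x :=
    Finset.card_eq_sum_card_fiberwise fun A hA => by
      have hA' := Finset.mem_powersetCard.1 (Finset.mem_coe.1 hA)
      exact hA'.1 (hf A hA'.1 hA'.2)
  rw [Finset.sum_congr rfl fun x hx => le_antisymm (hmax a ha x hx) (hmax x hx a ha),
    Finset.card_powersetCard, Finset.sum_const, smul_eq_mul] at hsum
  have hpos : 0 < s.card := Finset.card_pos.2 ⟨a, ha⟩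
  apply not_dvd_choose_pred s.card p hp hpos hps
  have hmul := Nat.add_one_mul_choose_eq (s.card - 1) (p - 1)
  rw [Nat.sub_add_cancel hpos, Nat.sub_add_cancel hp.pos, hsum, mul_assoc] at hmul
  exact ⟨score f p s a, by rw [Nat.eq_of_mul_eq_mul_left hpos hmul, mul_comm]⟩

lemma score_map {α β : Type*} [DecidableEq α] [DecidableEq β] (f : Finset β → β)
    (c : Finset α → α) (p : ℕ) (s : Finset α) (y : α ↪ β)
    (h : ∀ A ⊆ s, A.card = p → f (A.map y) = y (c A)) (i : α) :
    score f p (s.map y) (y i) = score c p s i := by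
  unfold score
  rw [Finset.powersetCard_map, Finset.filter_map, Finset.card_map]
  congr 1
  refine Finset.filter_congr fun A hA => ?_
  obtain ⟨h1, h2⟩ := Finset.mem_powersetCard.1 hA
  simp [Finset.mapEmbedding_apply, h A h1 h2]

/-- The top scorers depend only on the pattern of choices made from `p`-element subsets. -/
lemma topScorers_map {α β : Type*} [DecidableEq α] [DecidableEq β] (f : Finset β → β)
    (c : Finset α → α) (p : ℕ) (s : Finset α) (y : α ↪ β)
    (h : ∀ A ⊆ s, A.card = p → f (A.map y) = y (c A)) :
    topScorers f p (s.map y) = (topScorers c p s).map y := by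
  unfold topScorers
  rw [Finset.filter_map]
  congr 1
  refine Finset.filter_congr fun i _ => ?_
  simp [score_map f c p s y h]

/-- Disjoint neighbourhoods of finitely many distinct points on which the pattern `c` of the
choices made by `f` from sets of at most `n` of the points is constant. -/
lemma exists_uniform_nhds {X ι : Type*} [TopologicalSpace X] [T2Space X] [DecidableEq X]
    [Fintype ι] [DecidableEq ι] (n : ℕ) (f : Finset X → X) (hf : ContSelOnLE n f)
    (x : ι → X) (hx : Function.Injective x) (i₀ : ι) :
    ∃ (U : ι → Set X) (c : Finset ι → ι), (∀ i, IsOpen (U i)) ∧ (∀ i, x i ∈ U i) ∧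
      Pairwise (fun i j => Disjoint (U i) (U j)) ∧
      ∀ A : Finset ι, A.Nonempty → A.card ≤ n → ∀ y : ι → X, (∀ i, y i ∈ U i) →
        f (A.image y) = y (c A) := by
  obtain ⟨V₀, hV₀, hV₀d⟩ := (Set.finite_range x).t2_separation
  have hVd : ∀ i j, i ≠ j → Disjoint (V₀ (x i)) (V₀ (x j)) := fun i j hij =>
    hV₀d ⟨i, rfl⟩ ⟨j, rfl⟩ (hx.ne hij)
  have key : ∀ A : Finset ι, ∃ (i : ι) (W : X → Set X), A.Nonempty → A.card ≤ n →
      (∀ j ∈ A, IsOpen (W (x j)) ∧ x j ∈ W (x j)) ∧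
      ∀ y : ι → X, (∀ j ∈ A, y j ∈ W (x j)) → f (A.image y) ∈ V₀ (x i) := by
    intro A
    by_cases hA : A.Nonempty ∧ A.card ≤ n
    · have hne : (A.image x).Nonempty := hA.1.image x
      have hc : (A.image x).card ≤ n := Finset.card_image_le.trans hA.2
      obtain ⟨i, -, hi⟩ := Finset.mem_image.1 (hf.1 _ hne hc)
      obtain ⟨W, hWo, hWm, -, hW⟩ := hf.2 _ hne hc (V₀ (x i)) (hV₀ _).2 (hi ▸ (hV₀ _).1)
      refine ⟨i, W, fun _ _ => ⟨fun j hj => ⟨hWo _ (Finset.mem_image_of_mem x hj),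
        hWm _ (Finset.mem_image_of_mem x hj)⟩, fun y hy => ?_⟩⟩
      refine hW _ (hA.1.image y) (Finset.card_image_le.trans hA.2) ?_ ?_
      · intro b hb
        obtain ⟨j, hj, rfl⟩ := Finset.mem_image.1 (Finset.mem_coe.1 hb)
        exact Set.mem_biUnion (Finset.mem_image_of_mem x hj) (hy j hj)
      · intro z hz
        obtain ⟨j, hj, rfl⟩ := Finset.mem_image.1 hz
        exact ⟨y j, Finset.mem_image_of_mem y hj, hy j hj⟩
    · exact ⟨i₀, fun _ => Set.univ, fun h1 h2 => absurd ⟨h1, h2⟩ hA⟩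
  choose c W hW using key
  refine ⟨fun i => V₀ (x i) ∩ ⋂ A : {A : Finset ι // A.Nonempty ∧ A.card ≤ n ∧ i ∈ A},
    W A.1 (x i), c, fun i => ?_, fun i => ?_, fun i j hij => ?_, fun A hA hAn y hy => ?_⟩
  · exact (hV₀ _).2.inter (isOpen_iInter_of_finite fun A =>
      ((hW A.1 A.2.1 A.2.2.1).1 i A.2.2.2).1)
  · exact ⟨(hV₀ _).1, Set.mem_iInter.2 fun A => ((hW A.1 A.2.1 A.2.2.1).1 i A.2.2.2).2⟩
  · exact (hVd i j hij).mono Set.inter_subset_left Set.inter_subset_left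
  · have hmem := (hW A hA hAn).2 y fun j hj => Set.mem_iInter.1 (hy j).2 ⟨A, hA, hAn, hj⟩
    obtain ⟨j, -, hj⟩ := Finset.mem_image.1
      (hf.1 _ (hA.image y) (Finset.card_image_le.trans hAn))
    rw [← hj] at hmem ⊢
    by_contra hne
    exact Set.disjoint_left.1 (hVd j (c A) fun h => hne (by rw [h])) (hy j).1 hmem

/-- If `n ≥ 2`, `n + 1` is not prime, and the Hausdorff space `X` admits a
continuous selection on `F_n(X)`, then `X` admits a continuous selection on `[X]^{n+1}`. -/
theorem statement2 {X : Type*} [TopologicalSpace X] [T2Space X] [DecidableEq X]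
    (n : ℕ) (hn : 2 ≤ n) (hnp : ¬ (n + 1).Prime)
    (hsel : ∃ f : Finset X → X, ContSelOnLE n f) :
    ∃ g : Finset X → X, ContSelOn (n + 1) g := by
  obtain ⟨f, hf⟩ := hsel
  obtain ⟨p, hp, hpd⟩ := Nat.exists_prime_and_dvd (n := n + 1) (by omega)
  have hpn : p ≤ n := by
    have h1 := Nat.le_of_dvd (Nat.succ_pos n) hpd
    have h2 : p ≠ n + 1 := fun h => hnp (h ▸ hp)
    omega
  have hT : ∀ s : Finset X, s.card = n + 1 →
      (topScorers f p s).Nonempty ∧ (topScorers f p s).card ≤ n := by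
    intro s hs
    have hne : s.Nonempty := Finset.card_pos.1 (by omega)
    refine ⟨topScorers_nonempty f p s hne, ?_⟩
    have := topScorers_card_lt f p s hp hne (hs ▸ hpd) fun A _ hA =>
      hf.1 A (Finset.card_pos.1 (hA ▸ hp.pos)) (hA ▸ hpn)
    omega
  refine ⟨fun s => f (topScorers f p s), fun s hs => ?_, fun x hx => ?_⟩
  · exact Finset.filter_subset _ _ (hf.1 _ (hT s hs).1 (hT s hs).2)
  · obtain ⟨U, c, hUo, hUx, hUd, hc⟩ := exists_uniform_nhds n f hf x hx 0
    refine ⟨U, hUo, hUx, hUd, c (topScorers c p Finset.univ), fun y hy => ?_⟩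
    have hyi : Function.Injective y := fun i j hij => by
      by_contra hne
      exact Set.disjoint_left.1 (hUd hne) (hy i) (hij ▸ hy j)
    have hmap : topScorers f p (Finset.univ.image y) =
        (topScorers c p Finset.univ).image y := by
      have h := topScorers_map f c p Finset.univ ⟨y, hyi⟩ fun A _ hA => by
        rw [Finset.map_eq_image]
        exact hc A (Finset.card_pos.1 (hA ▸ hp.pos)) (hA ▸ hpn) y hy
      rwa [Finset.map_eq_image, Finset.map_eq_image] at h
    have hcard : (Finset.univ.image y).card = n + 1 := by
      rw [Finset.card_image_of_injective _ hyi, Finset.card_univ, Fintype.card_fin]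
    have hT' := (hT _ hcard).2
    rw [hmap, Finset.card_image_of_injective _ hyi] at hT'
    change f (topScorers f p (Finset.univ.image y)) ∈ _
    rw [hmap, hc _ (topScorers_nonempty c p _ Finset.univ_nonempty) hT' y hy]
    exact hy _
end

section
/- Let X be a Hausdorff topological space. Then the following are equivalent: (a) for every natural number n ≥ 2 there exists a continuous selection on [X]^n; (b) for every prime number p there exists a continuous selection on [X]^p. -/
open Filter Topology

section

variable {X : Type*} [DecidableEq X] {n : ℕ}

/-- The structure on `Fin n` induced by the selections `f p`, `p` prime, along `x : Fin n → X`: to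
a subset `A` of prime cardinality `p` it assigns the set of indices in `A` (a singleton if `x` is
injective) at which `x` takes the value selected by `f p` from the image of `A`. Subsets of other
cardinalities are sent to `∅`. -/
def selCode (f : ℕ → Finset X → X) (x : Fin n → X) (A : Finset (Fin n)) : Finset (Fin n) :=
  {j ∈ A | A.card.Prime ∧ x j = f A.card (A.image x)}

lemma mem_selCode {f : ℕ → Finset X → X} {x : Fin n → X} {A : Finset (Fin n)} {j : Fin n} :
    j ∈ selCode f x A ↔ j ∈ A ∧ A.card.Prime ∧ x j = f A.card (A.image x) := by
  simp [selCode]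

lemma mem_selCode_comp {f : ℕ → Finset X → X} {x : Fin n → X} (σ : Equiv.Perm (Fin n))
    {A : Finset (Fin n)} {j : Fin n} :
    j ∈ selCode f (x ∘ σ) A ↔ σ j ∈ selCode f x (A.image σ) := by
  simp only [mem_selCode, Finset.card_image_of_injective _ σ.injective, Finset.image_image]
  simp

lemma selCode_comp_congr {f : ℕ → Finset X → X} {x y : Fin n → X}
    (h : selCode f x = selCode f y) (σ : Equiv.Perm (Fin n)) :
    selCode f (x ∘ σ) = selCode f (y ∘ σ) := by
  funext A
  ext j
  rw [mem_selCode_comp, mem_selCode_comp, h]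

lemma selCode_comp_pow {f : ℕ → Finset X → X} {x : Fin n → X} {σ : Equiv.Perm (Fin n)}
    (h : selCode f (x ∘ σ) = selCode f x) (k : ℕ) :
    selCode f (x ∘ (σ ^ k : Equiv.Perm (Fin n))) = selCode f x := by
  induction k with
  | zero => simp
  | succ k ih =>
    have := selCode_comp_congr ih σ
    rw [h] at this
    rw [← this, pow_succ]
    rfl

/-- Rigidity: the structure induced by selections on all prime cardinalities has no nontrivial
automorphism. -/
lemma eq_one_of_selCode_comp {f : ℕ → Finset X → X} (hf : ∀ p, p.Prime → SelOn p (f p))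
    {x : Fin n → X} (hx : Function.Injective x) {σ : Equiv.Perm (Fin n)}
    (h : selCode f (x ∘ σ) = selCode f x) : σ = 1 := by
  by_contra hσ
  have ho : orderOf σ ≠ 1 := by rwa [Ne, orderOf_eq_one_iff]
  obtain ⟨q, hq, hqd⟩ := Nat.exists_prime_and_dvd ho
  -- `τ` is a power of `σ` of prime order `q`.
  set τ : Equiv.Perm (Fin n) := σ ^ (orderOf σ / q) with hτ
  have hτo : orderOf τ = q := orderOf_pow_orderOf_div (orderOf_pos σ).ne' hqd
  have hcode : selCode f (x ∘ τ) = selCode f x := selCode_comp_pow h _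
  have hτ1 : τ ≠ 1 := by
    intro h1
    rw [h1, orderOf_one] at hτo
    exact hq.one_lt.ne hτo
  obtain ⟨a, ha⟩ : ∃ a, τ a ≠ a := by
    by_contra! hc
    exact hτ1 (Equiv.ext hc)
  set A := (τ.cycleOf a).support with hA
  have hcyc : (τ.cycleOf a).IsCycle := Equiv.Perm.isCycle_cycleOf τ ha
  have hcard : A.card = q := by
    have hd : orderOf (τ.cycleOf a) ∣ orderOf τ := Equiv.Perm.orderOf_cycleOf_dvd_orderOf τ a
    rw [hcyc.orderOf, hτo] at hd
    refine (hq.eq_one_or_self_of_dvd _ hd).resolve_left ?_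
    have h2 : 2 ≤ A.card := hcyc.two_le_card_support
    change A.card ≠ 1
    omega
  have himg : A.image τ = A := by
    apply Finset.eq_of_subset_of_card_le
    · intro b hb
      obtain ⟨c, hc, rfl⟩ := Finset.mem_image.1 hb
      rw [hA, Equiv.Perm.mem_support_cycleOf_iff' ha] at hc ⊢
      exact Equiv.Perm.sameCycle_apply_right.2 hc
    · rw [Finset.card_image_of_injective _ τ.injective]
  have hsel := hf q hq (A.image x) (by rw [Finset.card_image_of_injective _ hx, hcard])
  obtain ⟨j, hj, hjx⟩ := Finset.mem_image.1 hsel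
  have hj1 : j ∈ selCode f x A := mem_selCode.2 ⟨hj, by rw [hcard]; exact hq, by rw [hcard, hjx]⟩
  have hj2 : τ j ∈ selCode f x A := by
    rw [← hcode, mem_selCode_comp, himg] at hj1
    exact hj1
  have hfix : τ j = j := hx ((mem_selCode.1 hj2).2.2.trans (mem_selCode.1 hj1).2.2.symm)
  have : j ∈ τ.support := Equiv.Perm.support_cycleOf_le τ a hj
  exact Equiv.Perm.mem_support.1 this hfix

/-- `x` enumerates `s` without repetition. -/
def IsEnum (s : Finset X) (x : Fin n → X) : Prop :=
  Function.Injective x ∧ Finset.image x Finset.univ = s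

lemma IsEnum.comp {s : Finset X} {x : Fin n → X} (h : IsEnum s x) (σ : Equiv.Perm (Fin n)) :
    IsEnum s (x ∘ σ) := by
  refine ⟨h.1.comp σ.injective, ?_⟩
  rw [← h.2, ← Finset.image_image, Finset.image_univ_equiv]

lemma IsEnum.exists_perm {s : Finset X} {x y : Fin n → X} (hx : IsEnum s x) (hy : IsEnum s y) :
    ∃ σ : Equiv.Perm (Fin n), y = x ∘ σ := by
  have h : ∀ i, ∃ j, x j = y i := by
    intro i
    have : y i ∈ Finset.image x Finset.univ := by
      rw [hx.2, ← hy.2]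
      exact Finset.mem_image_of_mem _ (Finset.mem_univ i)
    simpa using this
  choose φ hφ using h
  have hinj : Function.Injective φ := fun i j hij => hy.1 (by rw [← hφ i, ← hφ j, hij])
  refine ⟨Equiv.ofBijective φ (Finite.injective_iff_bijective.1 hinj), ?_⟩
  funext i
  exact (hφ i).symm

lemma exists_isEnum {s : Finset X} (hs : s.card = n) : ∃ x : Fin n → X, IsEnum s x := by
  let e := s.equivFinOfCardEq hs
  refine ⟨fun i => (e.symm i : X), fun i j hij => e.symm.injective (Subtype.ext hij), ?_⟩
  ext a
  simp only [Finset.mem_image, Finset.mem_univ, true_and]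
  constructor
  · rintro ⟨i, rfl⟩
    exact (e.symm i).2
  · intro ha
    exact ⟨e ⟨a, ha⟩, by simp⟩

/-- `x` enumerates `s`, and its code is least among those of all enumerations of `s`, codes being
ordered by an auxiliary numbering `N`. -/
def IsMinEnum (f : ℕ → Finset X → X) (N : (Finset (Fin n) → Finset (Fin n)) → ℕ) (s : Finset X)
    (x : Fin n → X) : Prop :=
  IsEnum s x ∧ ∀ y, IsEnum s y → N (selCode f x) ≤ N (selCode f y)

lemma exists_isMinEnum (f : ℕ → Finset X → X) (N : (Finset (Fin n) → Finset (Fin n)) → ℕ)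
    {s : Finset X} (hs : s.card = n) : ∃ x, IsMinEnum f N s x := by
  obtain ⟨x, hx, hmin⟩ := (measure fun x : Fin n → X => N (selCode f x)).wf.has_min
    {x | IsEnum s x} (exists_isEnum hs)
  exact ⟨x, hx, fun y hy => not_lt.1 (hmin y hy)⟩

lemma IsMinEnum.unique {f : ℕ → Finset X → X} (hf : ∀ p, p.Prime → SelOn p (f p))
    {N : (Finset (Fin n) → Finset (Fin n)) → ℕ} (hN : Function.Injective N) {s : Finset X}
    {x y : Fin n → X} (hx : IsMinEnum f N s x) (hy : IsMinEnum f N s y) : x = y := by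
  have hc : selCode f y = selCode f x := hN (le_antisymm (hy.2 x hx.1) (hx.2 y hy.1))
  obtain ⟨σ, rfl⟩ := hx.1.exists_perm hy.1
  rw [eq_one_of_selCode_comp hf hx.1.1 hc]
  rfl

/-- Minimality depends only on the code, so it is inherited by enumerations of another set along
the same permutation. -/
lemma IsMinEnum.transfer {f : ℕ → Finset X → X} {N : (Finset (Fin n) → Finset (Fin n)) → ℕ}
    {s t : Finset X} {x y : Fin n → X} (hx : IsEnum s x) (hy : IsEnum t y)
    (hxy : selCode f y = selCode f x) {σ : Equiv.Perm (Fin n)} (h : IsMinEnum f N s (x ∘ σ)) :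
    IsMinEnum f N t (y ∘ σ) := by
  refine ⟨hy.comp σ, fun z hz => ?_⟩
  obtain ⟨τ, rfl⟩ := hy.exists_perm hz
  rw [selCode_comp_congr hxy σ, selCode_comp_congr hxy τ]
  exact h.2 _ (hx.comp τ)

variable [TopologicalSpace X]

/-- The code is locally constant at injective maps, for the product topology on `Fin n → X`. -/
lemma eventually_selCode_eq {f : ℕ → Finset X → X} (hf : ∀ p, p.Prime → ContSelOn p (f p))
    {x : Fin n → X} (hx : Function.Injective x) :
    ∀ᶠ y in 𝓝 x, selCode f y = selCode f x := by
  have key : ∀ A : Finset (Fin n), ∃ D, ∀ᶠ y in 𝓝 x, selCode f y A = D := by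
    intro A
    by_cases hA : A.card.Prime
    · obtain ⟨hsel, hcont⟩ := hf _ hA
      set e := A.orderEmbOfFin rfl with he
      obtain ⟨U, hUo, hxU, hdisj, j, hj⟩ := hcont (x ∘ e) (hx.comp e.injective)
      refine ⟨{e j}, ?_⟩
      have hev : ∀ᶠ y in 𝓝 x, ∀ i, y (e i) ∈ U i :=
        eventually_all.2 fun i =>
          (continuous_apply (e i)).continuousAt.eventually ((hUo i).mem_nhds (hxU i))
      filter_upwards [hev] with y hy
      have himg : Finset.image (y ∘ e) Finset.univ = A.image y := by
        rw [← Finset.image_image, he, Finset.image_orderEmbOfFin_univ]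
      have hidx : ∀ i k, y (e i) ∈ U k → i = k := by
        intro i k hik
        by_contra hne
        exact Set.disjoint_left.1 (hdisj hne) (hy i) hik
      have hinj : Function.Injective (y ∘ e) := fun i k hik =>
        hidx i k (by have := hy k; rwa [← show y (e i) = y (e k) from hik] at this)
      have hfU : f A.card (A.image y) ∈ U j := himg ▸ hj (y ∘ e) hy
      have hmem : f A.card (A.image y) ∈ A.image y := by
        apply hsel
        rw [← himg, Finset.card_image_of_injective _ hinj, Finset.card_univ, Fintype.card_fin]
      rw [← himg, Finset.mem_image] at hmem
      obtain ⟨i, -, hi⟩ := hmem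
      rw [himg] at hi
      have hij : i = j := hidx i j (by rw [← hi] at hfU; exact hfU)
      subst hij
      ext k
      rw [mem_selCode, Finset.mem_singleton]
      constructor
      · rintro ⟨hk, -, hk2⟩
        have : k ∈ Finset.image e Finset.univ := by
          rwa [he, Finset.image_orderEmbOfFin_univ]
        obtain ⟨l, -, rfl⟩ := Finset.mem_image.1 this
        rw [hinj (hk2.trans hi.symm)]
      · rintro rfl
        exact ⟨Finset.orderEmbOfFin_mem _ _ _, hA, hi⟩
    · exact ⟨∅, Eventually.of_forall fun y => by simp [selCode, hA]⟩
  have hall : ∀ᶠ y in 𝓝 x, ∀ A, selCode f y A = selCode f x A := by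
    refine eventually_all.2 fun A => ?_
    obtain ⟨D, hD⟩ := key A
    filter_upwards [hD] with y hy
    rw [hy, hD.self_of_nhds]
  filter_upwards [hall] with y hy using funext hy

/-- Continuous selections on all prime cardinalities yield one on every positive cardinality. -/
lemma exists_contSelOn_of_prime [T2Space X] {f : ℕ → Finset X → X}
    (hf : ∀ p, p.Prime → ContSelOn p (f p)) (hn : 0 < n) :
    ∃ F : Finset X → X, ContSelOn n F := by
  classical
  have hsel : ∀ p, p.Prime → SelOn p (f p) := fun p hp => (hf p hp).1
  obtain ⟨N, hN⟩ : ∃ N : (Finset (Fin n) → Finset (Fin n)) → ℕ, Function.Injective N :=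
    ⟨_, Fin.val_injective.comp (Fintype.equivFin _).injective⟩
  let i₀ : Fin n := ⟨0, hn⟩
  obtain ⟨F, hF⟩ : ∃ F : Finset X → X, ∀ s x, IsMinEnum f N s x → F s = x i₀ := by
    refine ⟨fun s => if h : ∃ x, IsMinEnum f N s x then h.choose i₀ else f 0 ∅, fun s x hx => ?_⟩
    have h : ∃ x, IsMinEnum f N s x := ⟨x, hx⟩
    simp only [dif_pos h]
    rw [h.choose_spec.unique hsel hN hx]
  refine ⟨F, fun s hs => ?_, fun x hx => ?_⟩
  · obtain ⟨x, hx⟩ := exists_isMinEnum f N hs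
    rw [hF s x hx]
    have := Finset.mem_image_of_mem x (Finset.mem_univ i₀)
    rwa [hx.1.2] at this
  · obtain ⟨V, hxV, hV⟩ := (Set.finite_range x).t2_separation
    obtain ⟨S, hS, hSo, hxS⟩ := eventually_nhds_iff.1 (eventually_selCode_eq hf hx)
    obtain ⟨W, hW, hWS⟩ := isOpen_pi_iff'.1 hSo x hxS
    have hdisj : Pairwise fun i j => Disjoint (V (x i) ∩ W i) (V (x j) ∩ W j) := fun i j hij =>
      (hV ⟨i, rfl⟩ ⟨j, rfl⟩ (hx.ne hij)).mono Set.inter_subset_left Set.inter_subset_left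
    have hxe : IsEnum (Finset.image x Finset.univ) x := ⟨hx, rfl⟩
    obtain ⟨z, hz⟩ := exists_isMinEnum f N (s := Finset.image x Finset.univ)
      (by rw [Finset.card_image_of_injective _ hx, Finset.card_univ, Fintype.card_fin])
    obtain ⟨σ, rfl⟩ := hxe.exists_perm hz.1
    refine ⟨fun i => V (x i) ∩ W i, fun i => (hxV _).2.inter (hW i).1,
      fun i => ⟨(hxV _).1, (hW i).2⟩, hdisj, σ i₀, fun y hy => ?_⟩
    have hyinj : Function.Injective y := by
      intro i j hij
      by_contra hne
      exact Set.disjoint_left.1 (hdisj hne) (hy i) (hij ▸ hy j)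
    have hcode : selCode f y = selCode f x := hS y (hWS fun i _ => (hy i).2)
    rw [hF _ _ (hz.transfer hxe ⟨hyinj, rfl⟩ hcode)]
    exact hy (σ i₀)

end

/-- A Hausdorff space `X` admits a continuous selection on `[X]^n` for every
`n ≥ 2` if and only if it admits one on `[X]^p` for every prime `p`. -/
theorem statement3 {X : Type*} [TopologicalSpace X] [T2Space X] [DecidableEq X] :
    (∀ n : ℕ, 2 ≤ n → ∃ f : Finset X → X, ContSelOn n f) ↔
    (∀ p : ℕ, p.Prime → ∃ f : Finset X → X, ContSelOn p f) := by
  refine ⟨fun h p hp => h p hp.two_le, fun h n hn => ?_⟩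
  -- The values of `f` off the primes are irrelevant; `g` only witnesses that they exist.
  obtain ⟨g, -⟩ := h 2 Nat.prime_two
  have h' : ∀ p : ℕ, ∃ f : Finset X → X, p.Prime → ContSelOn p f := by
    intro p
    by_cases hp : p.Prime
    · exact (h p hp).imp fun f hf _ => hf
    · exact ⟨g, fun hp' => absurd hp' hp⟩
  choose f hf using h'
  exact exists_contSelOn_of_prime hf (by omega)
end

section
/- Let p be a prime number, m a natural number with p ≤ m, Y a finite set with |Y| = m, and g a function assigning to each p-element subset A of Y an element g(A) ∈ A. If the number W_g(x) = |{A ⊆ Y : |A| = p and g(A) = x}| is the same for all x, y ∈ Y (i.e., W_g(x) = W_g(y) for all x, y ∈ Y), then p does not divide m. -/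
/-!
Counting the `p`-subsets of `Y` by the element selected gives `C(m, p) = m * W`, where `W` is the
common value of `W_g`. As `p * C(m, p) = m * C(m - 1, p - 1)`, it follows that
`C(m - 1, p - 1) = p * W`. If `p ∣ m`, then `m - 1 ≡ p - 1` modulo `p`, so Lucas' theorem gives
`C(m - 1, p - 1) ≡ 1` modulo `p`, a contradiction.
-/

/-- The last base-`p` digit of `p * k + (p - 1)` is `p - 1`, so Lucas' theorem reduces the
binomial coefficient to `C(p - 1, p - 1) * C(k, 0)` modulo `p`. -/
lemma choose_pred_modEq_one {p k : ℕ} (hp : p.Prime) :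
    (p * k + (p - 1)).choose (p - 1) ≡ 1 [MOD p] := by
  haveI := Fact.mk hp
  have hlt : p - 1 < p := Nat.sub_lt hp.pos one_pos
  have h := Choose.choose_modEq_choose_mod_mul_choose_div_nat
    (n := p * k + (p - 1)) (k := p - 1) (p := p)
  simpa [Nat.mul_add_mod, Nat.mod_eq_of_lt hlt, Nat.div_eq_of_lt hlt] using h

/-- The `p`-element subsets of `Y` are partitioned by the value of `g`. -/
lemma choose_eq_sum_ncard {Y : Type*} [Fintype Y] (p : ℕ) (g : Finset Y → Y) :
    (Fintype.card Y).choose p = ∑ x : Y, Set.ncard {A : Finset Y | A.card = p ∧ g A = x} := by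
  classical
  rw [← Finset.card_univ, ← Finset.card_powersetCard,
    Finset.card_eq_sum_card_fiberwise (f := g) (t := Finset.univ) (fun _ _ => by simp)]
  refine Finset.sum_congr rfl fun x _ => ?_
  rw [← Set.ncard_coe_finset]
  congr 1
  ext A
  simp [Finset.mem_powersetCard]

/-- If `Y` is a finite set with `|Y| = m`, `p ≤ m` is prime, and `g` is a
selection on the `p`-element subsets of `Y` whose "in-degree" `W_g(x)` (the number of
`p`-element subsets selecting `x`) is the same for all `x ∈ Y`, then `p` does not
divide `m`. -/
theorem statement4 (p m : ℕ) (hp : p.Prime) (hpm : p ≤ m)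
    (Y : Type*) [Fintype Y] (hY : Fintype.card Y = m)
    (g : Finset Y → Y) (hg : ∀ A : Finset Y, A.card = p → g A ∈ A)
    (hW : ∀ x y : Y,
      Set.ncard {A : Finset Y | A.card = p ∧ g A = x} =
      Set.ncard {A : Finset Y | A.card = p ∧ g A = y}) :
    ¬ p ∣ m := by
  intro hdvd
  have hm : 0 < m := hp.pos.trans_le hpm
  obtain ⟨x₀⟩ : Nonempty Y := Fintype.card_pos_iff.mp (hY ▸ hm)
  have hcount := choose_eq_sum_ncard p g
  rw [Finset.sum_congr rfl (fun x _ => hW x x₀), Finset.sum_const, Finset.card_univ, hY,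
    smul_eq_mul] at hcount
  set W := Set.ncard {A : Finset Y | A.card = p ∧ g A = x₀}
  have habs : m * (m - 1).choose (p - 1) = m.choose p * p := by
    have h := Nat.add_one_mul_choose_eq (m - 1) (p - 1)
    rwa [Nat.sub_add_cancel hm, Nat.sub_add_cancel hp.pos] at h
  have hval : (m - 1).choose (p - 1) = W * p := by
    apply Nat.eq_of_mul_eq_mul_left hm
    rw [habs, hcount, mul_assoc]
  obtain ⟨k, rfl⟩ := hdvd
  obtain ⟨j, rfl⟩ : ∃ j, k = j + 1 := Nat.exists_eq_succ_of_ne_zero (by rintro rfl; simp at hm)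
  have hpred : p * (j + 1) - 1 = p * j + (p - 1) := by
    rw [mul_add, mul_one, Nat.add_sub_assoc hp.pos]
  have hone := choose_pred_modEq_one (k := j) hp
  rw [← hpred, hval] at hone
  have hdvd_one : p ∣ 1 := (hone.dvd_iff dvd_rfl).mp (dvd_mul_left p W)
  exact hp.one_lt.ne' (Nat.dvd_one.mp hdvd_one)
end

section
/- Let n ≥ 3 be an odd natural number, Y a finite set with |Y| = n, and g a function assigning to each 2-element subset A of Y an element g(A) ∈ A, such that W_g(x) = W_g(y) for all x, y ∈ Y. Then for all distinct x, y ∈ Y with g({x,y}) = y, there exists z ∈ Y \ {x,y} such that g({y,z}) = z and g({z,x}) = x. -/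
/-!
View `g` as a tournament on `Y`, where `g {u, v}` is the winner of the pair. Then `W_g(u)` is the
number of opponents beaten by `u` (`ncard_selected`). Suppose `y` beats `x` and there is no `z` such
that `z` beats `y` and `x` beats `z`. Then `y` beats everyone that `x` beats, and also `x` itself,
so `W_g(x) < W_g(y)`, against the constancy of `W_g`.
-/

/-- Sending an opponent `z` to the pair `{u, z}` identifies the elements beaten by `u` with the
pairs on which `u` is selected. -/
lemma ncard_selected {Y : Type*} [DecidableEq Y] (g : Finset Y → Y)
    (hg : ∀ A : Finset Y, A.card = 2 → g A ∈ A) (u : Y) :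
    Set.ncard {A : Finset Y | A.card = 2 ∧ g A = u} =
      Set.ncard {z : Y | z ≠ u ∧ g {u, z} = u} := by
  symm
  refine Set.ncard_congr (fun z _ => {u, z}) ?_ ?_ ?_
  · rintro z ⟨hz, hgz⟩
    exact ⟨Finset.card_pair hz.symm, hgz⟩
  · rintro a b ⟨ha, -⟩ - hab
    have h : a ∈ ({u, b} : Finset Y) := by
      rw [← hab]
      simp
    simpa [ha] using h
  · rintro A ⟨hA, hgA⟩
    have hu : u ∈ A := hgA ▸ hg A hA
    obtain ⟨a, b, hab, rfl⟩ := Finset.card_eq_two.mp hA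
    rcases Finset.mem_insert.mp hu with rfl | h
    · exact ⟨b, ⟨hab.symm, hgA⟩, rfl⟩
    · obtain rfl := Finset.mem_singleton.mp h
      exact ⟨a, ⟨hab, by rwa [Finset.pair_comm]⟩, Finset.pair_comm _ _⟩


/-- Let `n ≥ 3` be odd, `Y` a finite set with `|Y| = n`, and `g` a selection
on the `2`-element subsets of `Y` with `W_g` constant. Then for distinct `x, y` with
`g {x, y} = y` there is `z ∉ {x, y}` with `g {y, z} = z` and `g {z, x} = x`. -/
theorem statement5 (n : ℕ) (hn : 3 ≤ n) (hodd : Odd n)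
    (Y : Type*) [Fintype Y] [DecidableEq Y] (hY : Fintype.card Y = n)
    (g : Finset Y → Y) (hg : ∀ A : Finset Y, A.card = 2 → g A ∈ A)
    (hW : ∀ x y : Y,
      Set.ncard {A : Finset Y | A.card = 2 ∧ g A = x} =
      Set.ncard {A : Finset Y | A.card = 2 ∧ g A = y}) :
    ∀ x y : Y, x ≠ y → g {x, y} = y →
      ∃ z : Y, z ≠ x ∧ z ≠ y ∧ g {y, z} = z ∧ g {z, x} = x := by
  intro x y hxy hgxy
  by_contra hno
  push Not at hno
  have hlt : Set.ncard {z : Y | z ≠ x ∧ g {x, z} = x} <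
      Set.ncard {z : Y | z ≠ y ∧ g {y, z} = y} := by
    refine Set.ncard_lt_ncard ?_ (Set.toFinite _)
    refine (Set.ssubset_iff_of_subset ?_).mpr
      ⟨x, ⟨hxy, by rwa [Finset.pair_comm]⟩, fun h => h.1 rfl⟩
    rintro z ⟨hzx, hgz⟩
    have hzy : z ≠ y := by
      rintro rfl
      exact hxy (hgz.symm.trans hgxy)
    refine ⟨hzy, ?_⟩
    have hmem := hg {y, z} (Finset.card_pair hzy.symm)
    rcases Finset.mem_insert.mp hmem with h | h
    · exact h
    · exact absurd (by rwa [Finset.pair_comm]) (hno z hzx hzy (Finset.mem_singleton.mp h))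
  rw [← ncard_selected g hg, ← ncard_selected g hg, hW x y] at hlt
  exact lt_irrefl _ hlt
end

section
/- Let X be a Hausdorff topological space, n ≥ 1, and f a continuous selection on F_n(X). Then for every m ≥ n and all distinct points x_1, …, x_m ∈ X there exist pairwise disjoint open sets U_1, …, U_m with x_i ∈ U_i for each i, such that for every k with 1 ≤ k ≤ n and every k-element subset I ⊆ {1,…,m} there is an index j ∈ I with the property that f({y_i : i ∈ I}) ∈ U_j for every choice of points y_i ∈ U_i (i ∈ I). -/
/-- Continuity of `f` at `{x i : i ∈ I}`, with the neighbourhoods indexed by all of `Fin m`. The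
conditions on `I` sit in the last clause so that the neighbourhoods exist for every `I` and can be
intersected over all of them. -/
lemma exists_nhds_of_index_set {X : Type*} [TopologicalSpace X] [DecidableEq X]
    {n : ℕ} {f : Finset X → X} (hf : ContSelOnLE n f) {m : ℕ} (x : Fin m → X)
    (W : Fin m → Set X) (hWo : ∀ i, IsOpen (W i)) (hxW : ∀ i, x i ∈ W i)
    (I : Finset (Fin m)) :
    ∃ G : Fin m → Set X, (∀ i, IsOpen (G i)) ∧ (∀ i, x i ∈ G i) ∧
      (I.Nonempty → I.card ≤ n → ∃ j ∈ I, ∀ y : Fin m → X, (∀ i ∈ I, y i ∈ G i) →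
        f (I.image y) ∈ W j) := by
  by_cases hI : I.Nonempty ∧ I.card ≤ n
  · obtain ⟨hne, hcard⟩ := hI
    have hc : (I.image x).card ≤ n := Finset.card_image_le.trans hcard
    obtain ⟨j, hj, hjx⟩ := Finset.mem_image.1 (hf.1 _ (hne.image x) hc)
    obtain ⟨U, hUo, hxU, -, hU⟩ := hf.2 _ (hne.image x) hc (W j) (hWo j) (hjx ▸ hxW j)
    refine ⟨fun i => if i ∈ I then U (x i) else Set.univ, fun i => ?_, fun i => ?_,
      fun _ _ => ⟨j, hj, fun y hy => ?_⟩⟩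
    · by_cases hi : i ∈ I
      · simpa [hi] using hUo _ (Finset.mem_image_of_mem x hi)
      · simp [hi]
    · by_cases hi : i ∈ I
      · simpa [hi] using hxU _ (Finset.mem_image_of_mem x hi)
      · simp [hi]
    · have hy' : ∀ i ∈ I, y i ∈ U (x i) := fun i hi => by simpa [hi] using hy i hi
      refine hU _ (hne.image y) (Finset.card_image_le.trans hcard) ?_ ?_
      · intro b hb
        obtain ⟨i, hi, rfl⟩ := Finset.mem_image.1 (Finset.mem_coe.1 hb)
        exact Set.mem_biUnion (Finset.mem_image_of_mem x hi) (hy' i hi)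
      · intro a ha
        obtain ⟨i, hi, rfl⟩ := Finset.mem_image.1 ha
        exact ⟨y i, Finset.mem_image_of_mem y hi, hy' i hi⟩
  · exact ⟨fun _ => Set.univ, fun _ => isOpen_univ, fun _ => Set.mem_univ _,
      fun h1 h2 => absurd ⟨h1, h2⟩ hI⟩

/-- If `f` is a continuous selection on `F_n(X)` (`n ≥ 1`), then for every
`m ≥ n` and all distinct `x_1, …, x_m` there are pairwise disjoint open neighbourhoods
`U_1, …, U_m` preserving the `f|_{[X]^k}`-relations for all `1 ≤ k ≤ n`. -/
theorem statement6 {X : Type*} [TopologicalSpace X] [T2Space X] [DecidableEq X]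
    (n : ℕ) (hn : 1 ≤ n) (f : Finset X → X) (hf : ContSelOnLE n f) :
    ∀ m : ℕ, n ≤ m → ∀ x : Fin m → X, Function.Injective x →
      ∃ U : Fin m → Set X,
        (∀ i, IsOpen (U i)) ∧ (∀ i, x i ∈ U i) ∧
        Pairwise (fun i j => Disjoint (U i) (U j)) ∧
        ∀ k : ℕ, 1 ≤ k → k ≤ n → ∀ I : Finset (Fin m), I.card = k →
          ∃ j ∈ I, ∀ y : Fin m → X, (∀ i ∈ I, y i ∈ U i) →
            f (I.image y) ∈ U j := by
  intro m _ x hx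
  obtain ⟨W', hW', hdisj⟩ := (Set.finite_range x).t2_separation
  have hW : ∀ i j, i ≠ j → Disjoint (W' (x i)) (W' (x j)) := fun i j hij =>
    hdisj (Set.mem_range_self i) (Set.mem_range_self j) (hx.ne hij)
  choose G hGo hxG hG using
    exists_nhds_of_index_set hf x (fun i => W' (x i)) (fun i => (hW' _).2) (fun i => (hW' _).1)
  refine ⟨fun i => W' (x i) ∩ ⋂ I, G I i,
    fun i => (hW' _).2.inter (isOpen_iInter_of_finite fun I => hGo I i),
    fun i => ⟨(hW' _).1, Set.mem_iInter.2 fun I => hxG I i⟩,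
    fun i j hij => (hW i j hij).mono Set.inter_subset_left Set.inter_subset_left, ?_⟩
  intro k hk hkn I hI
  have hne : I.Nonempty := Finset.card_pos.1 (by omega)
  obtain ⟨j, hj, hjG⟩ := hG I hne (by omega)
  refine ⟨j, hj, fun y hy => ?_⟩
  have hfW := hjG y fun i hi => Set.mem_iInter.1 (hy i hi).2 I
  obtain ⟨i, hi, hiy⟩ := Finset.mem_image.1
    (hf.1 _ (hne.image y) (Finset.card_image_le.trans (by omega)))
  have hij : i = j := by
    by_contra h
    exact Set.disjoint_left.1 (hW i j h) (hy i hi).1 (hiy ▸ hfW)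
  subst hij
  exact hiy ▸ hy i hi
end

section
/- Let X be a Hausdorff topological space, n ≤ m natural numbers with n ≥ 1, f a selection on [X]^n (not assumed continuous), and U_1, …, U_m pairwise disjoint nonempty open subsets of X such that for every n-element subset I ⊆ {1,…,m} there is an index j ∈ I with f({z_i : i ∈ I}) ∈ U_j for every choice of points z_i ∈ U_i (i ∈ I). Then for any points x_i, y_i ∈ U_i (i = 1,…,m), any n-element subset I ⊆ {1,…,m}, and any i₀ ∈ I, one has f({x_i : i ∈ I}) = x_{i₀} if and only if f({y_i : i ∈ I}) = y_{i₀}; that is, the bijection x_i ↦ y_i is an isomorphism between the selections induced by f on {x_1,…,x_m} and on {y_1,…,y_m}. -/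
/-- If `f` is a (not necessarily continuous) selection on `[X]^n`,
`1 ≤ n ≤ m`, and `U_1, …, U_m` are pairwise disjoint nonempty open sets preserving
`f`-relations, then for points `x_i, y_i ∈ U_i` the bijection `x_i ↦ y_i` is an
isomorphism between the selections induced by `f` on `{x_1,…,x_m}` and `{y_1,…,y_m}`. -/
theorem statement7 {X : Type*} [TopologicalSpace X] [T2Space X] [DecidableEq X]
    (n m : ℕ) (hn : 1 ≤ n) (hnm : n ≤ m)
    (f : Finset X → X) (hf : SelOn n f)
    (U : Fin m → Set X)
    (hUo : ∀ i, IsOpen (U i)) (hUne : ∀ i, (U i).Nonempty)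
    (hUd : Pairwise (fun i j => Disjoint (U i) (U j)))
    (hrel : ∀ I : Finset (Fin m), I.card = n →
      ∃ j ∈ I, ∀ z : Fin m → X, (∀ i ∈ I, z i ∈ U i) → f (I.image z) ∈ U j) :
    ∀ x y : Fin m → X, (∀ i, x i ∈ U i) → (∀ i, y i ∈ U i) →
      ∀ I : Finset (Fin m), I.card = n → ∀ i₀ ∈ I,
        (f (I.image x) = x i₀ ↔ f (I.image y) = y i₀) := by
  intro x y hx hy I hI i₀ _
  obtain ⟨j, _, hj⟩ := hrel I hI
  have index_unique : ∀ {p : X} {a b : Fin m}, p ∈ U a → p ∈ U b → a = b := by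
    intro p a b ha hb
    by_contra hab
    exact Set.disjoint_left.mp (hUd hab) ha hb
  -- The index `j` depends only on `I`, so the condition `i₀ = j` links the two sides.
  have key : ∀ z : Fin m → X, (∀ i, z i ∈ U i) → (f (I.image z) = z i₀ ↔ i₀ = j) := by
    intro z hz
    have hfj : f (I.image z) ∈ U j := hj z fun i _ => hz i
    constructor
    · intro h
      exact index_unique (hz i₀) (h ▸ hfj)
    · rintro rfl
      have hinj : Function.Injective z := fun a b hab =>
        index_unique (hz a) (hab ▸ hz b)
      have hmem := hf (I.image z) (by rw [Finset.card_image_of_injective _ hinj, hI])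
      obtain ⟨k, _, hk⟩ := Finset.mem_image.mp hmem
      have hki : k = i₀ := index_unique (hz k) (hk ▸ hfj)
      rw [← hk, hki]
  rw [key x hx, key y hy]
end

section
/- Let X be a Hausdorff topological space, n ≤ m natural numbers with n ≥ 1, and f a continuous selection on [X]^n. Then for every m-element subset s = {x_1,…,x_m} of X (with the x_i distinct) there exist pairwise disjoint open sets U_1,…,U_m with x_i ∈ U_i for each i, such that for every choice of points y_i ∈ U_i (i = 1,…,m) the selection induced by f on the n-element subsets of {y_1,…,y_m} is isomorphic to the selection induced by f on the n-element subsets of s (via the bijection x_i ↦ y_i). In particular, for any set Y with |Y| = m and any selection g on the n-element subsets of Y, the class 𝒫(g) = {s ∈ [X]^m : the selection induced by f on the n-element subsets of s is isomorphic to g} is clopen in [X]^m with the Vietoris topology. -/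
/-- The Vietoris topology on the family `[X]^m` of `m`-element subsets of `X`,
generated by the sets `⟨𝒱⟩` for finite families `𝒱` of open sets. -/
def VietorisFinset (X : Type*) [TopologicalSpace X] (m : ℕ) :
    TopologicalSpace {s : Finset X // s.card = m} :=
  TopologicalSpace.generateFrom
    {T | ∃ 𝒱 : Set (Set X), 𝒱.Finite ∧ (∀ V ∈ 𝒱, IsOpen V) ∧
      T = {s | (↑s.1 : Set X) ⊆ ⋃₀ 𝒱 ∧ ∀ V ∈ 𝒱, ∃ x ∈ s.1, x ∈ V}}

open Filter Topology

/-- Near an injective tuple `x`, the index of the point selected from the subtuple indexed by `I`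
does not change. -/
lemma eventually_select_const {X : Type*} [TopologicalSpace X] [DecidableEq X]
    {n m : ℕ} {f : Finset X → X} (hf : ContSelOn n f) {x : Fin m → X}
    (hx : Function.Injective x) (I : Finset (Fin m)) (hI : I.card = n) :
    ∃ i₁, ∀ᶠ y in 𝓝 x, f (I.image y) = y i₁ := by
  obtain ⟨hsel, hcont⟩ := hf
  set e := I.orderEmbOfFin hI with he
  have heI : Finset.univ.image e = I := by simp [he]
  obtain ⟨U, hUo, hxU, hUd, j, hj⟩ := hcont (x ∘ e) (hx.comp e.injective)
  refine ⟨e j, ?_⟩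
  have hev : ∀ᶠ y in 𝓝 x, ∀ k, y (e k) ∈ U k :=
    eventually_all.2 fun k =>
      (continuous_apply (e k)).continuousAt.eventually_mem ((hUo k).mem_nhds (hxU k))
  filter_upwards [hev] with y hy
  have himg : I.image y = Finset.univ.image (y ∘ e) := by
    rw [← Finset.image_image, heI]
  have huniq : ∀ k l, y (e k) ∈ U l → k = l := fun k l h => by
    by_contra hne
    exact Set.disjoint_left.1 (hUd hne) (hy k) h
  have hinj : Function.Injective (y ∘ e) := fun k l h => by
    have h' : y (e k) = y (e l) := h
    exact huniq k l (h' ▸ hy l)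
  have hmem := hsel (Finset.univ.image (y ∘ e))
    (by rw [Finset.card_image_of_injective _ hinj]; simp)
  obtain ⟨k, -, hk⟩ := Finset.mem_image.1 hmem
  have hkj := hj (y ∘ e) hy
  rw [← hk] at hkj
  rw [himg, ← hk, ← huniq k j hkj]
  rfl

/-- Around an injective tuple there is a box with disjoint open sides on which the index of the
selected point is constant for every `n`-element index set. -/
lemma exists_box {X : Type*} [TopologicalSpace X] [T2Space X] [DecidableEq X]
    {n m : ℕ} {f : Finset X → X} (hf : ContSelOn n f) {x : Fin m → X}
    (hx : Function.Injective x) :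
    ∃ U : Fin m → Set X,
      (∀ i, IsOpen (U i)) ∧ (∀ i, x i ∈ U i) ∧
      Pairwise (fun i j => Disjoint (U i) (U j)) ∧
      ∀ y : Fin m → X, (∀ i, y i ∈ U i) →
        ∀ I : Finset (Fin m), I.card = n → ∀ i₀ ∈ I,
          (f (I.image x) = x i₀ ↔ f (I.image y) = y i₀) := by
  obtain ⟨W, hW, hWd⟩ := (Set.finite_range x).t2_separation
  choose i₁ hi₁ using fun I hI => eventually_select_const hf hx I hI
  have hall : ∀ᶠ y in 𝓝 x, ∀ (I : Finset (Fin m)) (hI : I.card = n),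
      f (I.image y) = y (i₁ I hI) :=
    eventually_all.2 fun I => eventually_all.2 fun hI => hi₁ I hI
  obtain ⟨O, hOsub, hOo, hxO⟩ := eventually_nhds_iff.1 hall
  obtain ⟨V, hV, hVO⟩ := isOpen_pi_iff'.1 hOo x hxO
  have hd : Pairwise (fun i j => Disjoint (V i ∩ W (x i)) (V j ∩ W (x j))) := fun i j hij =>
    (hWd ⟨i, rfl⟩ ⟨j, rfl⟩ (hx.ne hij)).mono Set.inter_subset_right Set.inter_subset_right
  refine ⟨fun i => V i ∩ W (x i), fun i => (hV i).1.inter (hW _).2,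
    fun i => ⟨(hV i).2, (hW _).1⟩, hd, fun y hy I hI i₀ _ => ?_⟩
  have hyinj : Function.Injective y := fun i j h => by
    by_contra hne
    exact Set.disjoint_left.1 (hd hne) (hy i) (h ▸ hy j)
  rw [hOsub x hxO I hI, hOsub y (hVO fun i _ => (hy i).1) I hI, hx.eq_iff, hyinj.eq_iff]

/-- If `x i ↦ y i` identifies the selections induced on `{x i}` and `{y i}`, then an isomorphism
of the first with `g` yields an isomorphism of the second with `g`. -/
lemma isoClass_transfer {X Y : Type*} [DecidableEq X] [DecidableEq Y]
    {n m : ℕ} {f : Finset X → X} (hsel : SelOn n f) {g : Finset Y → Y} {x y : Fin m → X}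
    (hx : Function.Injective x) (hy : Function.Injective y)
    (hxy : ∀ I : Finset (Fin m), I.card = n → ∀ i₀ ∈ I,
      (f (I.image x) = x i₀ ↔ f (I.image y) = y i₀))
    (h : ∃ φ : X → Y, Set.BijOn φ (↑(Finset.univ.image x)) Set.univ ∧
      ∀ A : Finset X, A ⊆ Finset.univ.image x → A.card = n → g (A.image φ) = φ (f A)) :
    ∃ φ : X → Y, Set.BijOn φ (↑(Finset.univ.image y)) Set.univ ∧
      ∀ A : Finset X, A ⊆ Finset.univ.image y → A.card = n → g (A.image φ) = φ (f A) := by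
  obtain ⟨φ, ⟨-, hinj, hsurj⟩, hg⟩ := h
  set ψ : X → Y := Function.extend y (φ ∘ x) φ with hψ
  have hψy : ∀ i, ψ (y i) = φ (x i) := fun i => hy.extend_apply _ _ i
  refine ⟨ψ, ⟨fun _ _ => trivial, ?_, ?_⟩, ?_⟩
  · intro a ha b hb hab
    obtain ⟨i, rfl⟩ : ∃ i, y i = a := by simpa using ha
    obtain ⟨j, rfl⟩ : ∃ i, y i = b := by simpa using hb
    rw [hψy, hψy] at hab
    rw [hx (hinj (by simp) (by simp) hab)]
  · intro b _
    obtain ⟨a, ha, rfl⟩ := hsurj (Set.mem_univ b)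
    obtain ⟨i, rfl⟩ : ∃ i, x i = a := by simpa using ha
    exact ⟨y i, by simp, hψy i⟩
  · intro A hA hAn
    obtain ⟨I, -, rfl⟩ := Finset.subset_image_iff.1 hA
    have hIn : I.card = n := by rwa [Finset.card_image_of_injective _ hy] at hAn
    obtain ⟨i₀, hi₀, hfi⟩ := Finset.mem_image.1 (hsel _ hAn)
    have hfx := (hxy I hIn i₀ hi₀).2 hfi.symm
    have hgx := hg (I.image x) (Finset.image_subset_image (Finset.subset_univ _))
      (by rw [Finset.card_image_of_injective _ hx, hIn])
    rw [hfx, Finset.image_image] at hgx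
    rw [← hfi, hψy, ← hgx, Finset.image_image]
    congr 1
    exact Finset.image_congr fun i _ => hψy i

/-- If `f` is a continuous selection on `[X]^n`, `1 ≤ n ≤ m`, then around
every `m`-element set there are pairwise disjoint open sets on which the induced
selection on `n`-element subsets is constant up to isomorphism; in particular, for any
set `Y` with `|Y| = m` and any selection `g` on the `n`-element subsets of `Y`, the
class `𝒫(g)` is clopen in `[X]^m` with the Vietoris topology. -/
theorem statement8 {X : Type*} [TopologicalSpace X] [T2Space X] [DecidableEq X]
    (n m : ℕ) (hn : 1 ≤ n) (hnm : n ≤ m)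
    (f : Finset X → X) (hf : ContSelOn n f) :
    (∀ x : Fin m → X, Function.Injective x →
      ∃ U : Fin m → Set X,
        (∀ i, IsOpen (U i)) ∧ (∀ i, x i ∈ U i) ∧
        Pairwise (fun i j => Disjoint (U i) (U j)) ∧
        ∀ y : Fin m → X, (∀ i, y i ∈ U i) →
          ∀ I : Finset (Fin m), I.card = n → ∀ i₀ ∈ I,
            (f (I.image x) = x i₀ ↔ f (I.image y) = y i₀)) ∧
    (∀ (Y : Type) (_ : Fintype Y) (_ : DecidableEq Y),
      Fintype.card Y = m →
      ∀ g : Finset Y → Y, (∀ A : Finset Y, A.card = n → g A ∈ A) →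
        @IsClopen {s : Finset X // s.card = m} (VietorisFinset X m)
          {s | ∃ φ : X → Y, Set.BijOn φ (↑s.1) Set.univ ∧
            ∀ A : Finset X, A ⊆ s.1 → A.card = n → g (A.image φ) = φ (f A)}) := by
  refine ⟨fun x hx => exists_box hf hx, ?_⟩
  intro Y _ _ _ g _
  letI : TopologicalSpace {s : Finset X // s.card = m} := VietorisFinset X m
  set P : Set {s : Finset X // s.card = m} := {s | ∃ φ : X → Y, Set.BijOn φ (↑s.1) Set.univ ∧
            ∀ A : Finset X, A ⊆ s.1 → A.card = n → g (A.image φ) = φ (f A)} with hP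
  have key : ∀ s : {s : Finset X // s.card = m}, ∃ N : Set {s : Finset X // s.card = m},
      IsOpen N ∧ s ∈ N ∧ ∀ t ∈ N, (s ∈ P ↔ t ∈ P) := by
    rintro ⟨s, hs⟩
    obtain ⟨x, hx, rfl⟩ : ∃ x : Fin m → X, Function.Injective x ∧ Finset.univ.image x = s := by
      refine ⟨fun i => (s.equivFinOfCardEq hs).symm i,
        Subtype.val_injective.comp (Equiv.injective _), ?_⟩
      ext a
      simp only [Finset.mem_image, Finset.mem_univ, true_and]
      exact ⟨fun ⟨i, hi⟩ => hi ▸ Subtype.property _,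
        fun ha => ⟨s.equivFinOfCardEq hs ⟨a, ha⟩, by simp⟩⟩
    obtain ⟨U, hUo, hxU, hUd, hU⟩ := exists_box hf hx
    refine ⟨_, TopologicalSpace.isOpen_generateFrom_of_mem
      ⟨Set.range U, Set.finite_range U, by rintro _ ⟨i, rfl⟩; exact hUo i, rfl⟩, ⟨?_, ?_⟩, ?_⟩
    · intro a ha
      obtain ⟨i, rfl⟩ : ∃ i, x i = a := by simpa using ha
      exact ⟨U i, ⟨i, rfl⟩, hxU i⟩
    · rintro _ ⟨i, rfl⟩
      exact ⟨x i, by simp, hxU i⟩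
    · rintro ⟨t, ht⟩ ⟨-, hmeet⟩
      choose y hyt hyU using fun i => hmeet (U i) ⟨i, rfl⟩
      have hy : Function.Injective y := fun i j h => by
        by_contra hne
        exact Set.disjoint_left.1 (hUd hne) (hyU i) (h ▸ hyU j)
      -- The `m` distinct points `y i` exhaust the `m`-element set `t`.
      obtain rfl : Finset.univ.image y = t := by
        refine Finset.eq_of_subset_of_card_le ?_ ?_
        · intro a ha
          obtain ⟨i, -, rfl⟩ := Finset.mem_image.1 ha
          exact hyt i
        · rw [Finset.card_image_of_injective _ hy, Finset.card_univ, Fintype.card_fin]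
          exact ht.le
      exact ⟨isoClass_transfer hf.1 hx hy (hU y hyU),
        isoClass_transfer hf.1 hy hx fun I hI i₀ hi₀ => (hU y hyU I hI i₀ hi₀).symm⟩
  refine ⟨⟨isOpen_iff_forall_mem_open.2 fun s hsP => ?_⟩,
    isOpen_iff_forall_mem_open.2 fun s hsP => ?_⟩
  · obtain ⟨N, hN, hsN, h⟩ := key s
    exact ⟨N, fun t ht htP => hsP ((h t ht).2 htP), hN, hsN⟩
  · obtain ⟨N, hN, hsN, h⟩ := key s
    exact ⟨N, fun t ht => (h t ht).1 hsP, hN, hsN⟩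
end

section
/- Let X be a Hausdorff topological space, k, n, m natural numbers with 1 ≤ n ≤ k and m ≤ 2k, f a continuous selection on F_k(X), Y a set with |Y| = m, and g a selection on the n-element subsets of Y such that W_g(x) ≠ W_g(y) for some x, y ∈ Y. Let 𝒫(g) = {s ∈ [X]^m : the selection induced by f on the n-element subsets of s is isomorphic to g}. Then there exists a function h : 𝒫(g) → X with h(s) ∈ s for every s ∈ 𝒫(g), such that for every s = {x_1,…,x_m} ∈ 𝒫(g) there exist pairwise disjoint open sets U_1,…,U_m with x_i ∈ U_i for each i and an index j ≤ m such that for every choice of points y_i ∈ U_i (i = 1,…,m) the set {y_1,…,y_m} belongs to 𝒫(g) and h({y_1,…,y_m}) ∈ U_j. (That is, h is a continuous selection on 𝒫(g) ⊆ [X]^m.) -/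
/-- The isomorphism class `𝒫(g)`: `m`-element subsets `s` of `X` on which the selection
induced by `f` on `n`-element subsets is isomorphic to `g`. -/
def PClass {X Y : Type*} [DecidableEq Y] (n m : ℕ)
    (f : Finset X → X) (g : Finset Y → Y) : Set (Finset X) :=
  {s | s.card = m ∧ ∃ φ : X → Y, Set.BijOn φ (↑s) Set.univ ∧
    ∀ A : Finset X, A ⊆ s → A.card = n → g (A.image φ) = φ (f A)}

/-- The points of `s` chosen by `f` on exactly `c` of the `n`-element subsets of `s`. -/
def degreeLevel {X : Type*} [DecidableEq X] (n : ℕ) (f : Finset X → X) (c : ℕ)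
    (s : Finset X) : Finset X :=
  s.filter fun x => ((s.powersetCard n).filter fun A => f A = x).card = c

/-- The index form of `degreeLevel`: the indices `i` such that `f` chooses `y i` on exactly `c` of
the `n`-element index sets. -/
def indexLevel {X : Type*} [DecidableEq X] {m : ℕ} (n : ℕ) (f : Finset X → X) (c : ℕ)
    (y : Fin m → X) : Finset (Fin m) :=
  Finset.univ.filter fun i =>
    ((Finset.univ.powersetCard n).filter fun A : Finset (Fin m) => f (A.image y) = y i).card = c

lemma degreeLevel_image {X : Type*} [DecidableEq X] {m : ℕ} (n : ℕ) (f : Finset X → X) (c : ℕ)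
    (y : Fin m → X) (hy : Function.Injective y) :
    degreeLevel n f c (Finset.univ.image y) = (indexLevel n f c y).image y := by
  have key : ∀ i, (((Finset.univ.image y).powersetCard n).filter fun A => f A = y i).card =
      ((Finset.univ.powersetCard n).filter
        fun A : Finset (Fin m) => f (A.image y) = y i).card := by
    intro i
    symm
    refine Finset.card_bij (fun A _ => A.image y) ?_ ?_ ?_
    · intro A hA
      simp only [Finset.mem_filter, Finset.mem_powersetCard] at hA ⊢
      exact ⟨⟨Finset.image_subset_image hA.1.1, by
        rw [Finset.card_image_of_injective _ hy, hA.1.2]⟩, hA.2⟩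
    · intro A _ B _ h
      exact Finset.image_injective hy h
    · intro B hB
      simp only [Finset.mem_filter, Finset.mem_powersetCard] at hB
      obtain ⟨A, -, rfl⟩ := Finset.subset_image_iff.1 hB.1.1
      refine ⟨A, ?_, rfl⟩
      simp only [Finset.mem_filter, Finset.mem_powersetCard]
      exact ⟨⟨Finset.subset_univ _, by
        rw [← hB.1.2, Finset.card_image_of_injective _ hy]⟩, hB.2⟩
  ext z
  simp only [degreeLevel, indexLevel, Finset.mem_filter, Finset.mem_image, Finset.mem_univ,
    true_and]
  constructor
  · rintro ⟨⟨i, rfl⟩, h⟩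
    exact ⟨i, by rw [← key, h], rfl⟩
  · rintro ⟨i, h, rfl⟩
    exact ⟨⟨i, rfl⟩, by rw [key, h]⟩

/-- For `s ∈ 𝒫(g)`, there are as many points of in-degree `c` in `s` as in `Y`, because the
isomorphism witnessing `s ∈ 𝒫(g)` maps the former bijectively onto the latter. -/
lemma degreeLevel_of_mem_PClass {X Y : Type*} [DecidableEq X] [Fintype Y] [DecidableEq Y]
    {n m : ℕ} {f : Finset X → X} {g : Finset Y → Y}
    (hfn : ∀ A : Finset X, A.card = n → f A ∈ A) (c : ℕ) {s : Finset X}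
    (hs : s ∈ PClass n m f g) :
    (degreeLevel n f c s).card =
      (Finset.univ.filter fun y : Y => Set.ncard {A : Finset Y | A.card = n ∧ g A = y} = c).card := by
  obtain ⟨-, φ, hφ, hiso⟩ := hs
  have key : ∀ x ∈ s, ((s.powersetCard n).filter fun A => f A = x).card =
      Set.ncard {A : Finset Y | A.card = n ∧ g A = φ x} := by
    intro x hx
    have e : {A : Finset Y | A.card = n ∧ g A = φ x} =
        ((Finset.univ.filter fun A : Finset Y => A.card = n ∧ g A = φ x : Finset (Finset Y)) :
          Set (Finset Y)) := by
      ext; simp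
    rw [e, Set.ncard_coe_finset]
    refine Finset.card_bij (fun A _ => A.image φ) ?_ ?_ ?_
    · intro A hA
      simp only [Finset.mem_filter, Finset.mem_powersetCard, Finset.mem_univ, true_and] at hA ⊢
      refine ⟨?_, ?_⟩
      · rw [Finset.card_image_of_injOn (hφ.injOn.mono (by exact_mod_cast hA.1.1)), hA.1.2]
      · rw [hiso A hA.1.1 hA.1.2, hA.2]
    · intro A hA B hB h
      simp only [Finset.mem_filter, Finset.mem_powersetCard] at hA hB
      have h' : φ '' (A : Set X) = φ '' (B : Set X) := by
        rw [← Finset.coe_image, ← Finset.coe_image, h]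
      exact_mod_cast (hφ.injOn.image_eq_image_iff (by exact_mod_cast hA.1.1)
        (by exact_mod_cast hB.1.1)).1 h'
    · intro B hB
      simp only [Finset.mem_filter, Finset.mem_univ, true_and] at hB
      have hBs : B ⊆ s.image φ := by
        intro b _
        obtain ⟨a, ha, rfl⟩ := hφ.surjOn (Set.mem_univ b)
        exact Finset.mem_image_of_mem _ (by exact_mod_cast ha)
      obtain ⟨A, hA, rfl⟩ := Finset.subset_image_iff.1 hBs
      have hA' : A ⊆ s := by exact_mod_cast hA
      have hc : A.card = n := by
        rw [← hB.1, Finset.card_image_of_injOn (hφ.injOn.mono hA)]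
      refine ⟨A, ?_, rfl⟩
      simp only [Finset.mem_filter, Finset.mem_powersetCard]
      refine ⟨⟨hA', hc⟩, ?_⟩
      have h2 := hB.2
      rw [hiso A hA' hc] at h2
      exact hφ.injOn (by exact_mod_cast hA' (hfn A hc)) (by exact_mod_cast hx) h2
  refine Finset.card_bij (fun x _ => φ x) ?_ ?_ ?_
  · intro x hx
    simp only [degreeLevel, Finset.mem_filter, Finset.mem_univ, true_and] at hx ⊢
    rw [← key x hx.1, hx.2]
  · intro a ha b hb h
    simp only [degreeLevel, Finset.mem_filter] at ha hb
    exact hφ.injOn (by exact_mod_cast ha.1) (by exact_mod_cast hb.1) h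
  · intro b hb
    simp only [Finset.mem_filter, Finset.mem_univ, true_and] at hb
    obtain ⟨a, ha, rfl⟩ := hφ.surjOn (Set.mem_univ b)
    refine ⟨a, ?_, rfl⟩
    simp only [degreeLevel, Finset.mem_filter]
    exact ⟨by exact_mod_cast ha, by rw [key a (by exact_mod_cast ha), hb]⟩

/-- Small moves of the points `x i` do not change the index that `f` selects, simultaneously for
all index sets of size at most `k`. -/
lemma exists_stable_nhds {X : Type*} [TopologicalSpace X] [T2Space X] [DecidableEq X] {k m : ℕ}
    {f : Finset X → X} (hf : ContSelOnLE k f) (x : Fin m → X) (hx : Function.Injective x) :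
    ∃ U : Fin m → Set X, (∀ i, IsOpen (U i)) ∧ (∀ i, x i ∈ U i) ∧
      Pairwise (fun i j => Disjoint (U i) (U j)) ∧
      ∀ y : Fin m → X, (∀ i, y i ∈ U i) → Function.Injective y ∧
        ∀ A : Finset (Fin m), A.Nonempty → A.card ≤ k → ∀ i,
          f (A.image y) = y i ↔ f (A.image x) = x i := by
  obtain ⟨hsel, hcont⟩ := hf
  obtain ⟨O, hO, hOd⟩ := (Set.finite_range x).t2_separation
  -- the neighbourhoods given by continuity of `f` at `A.image x`
  have step : ∀ A : Finset (Fin m), ∃ V : X → Set X, (∀ i ∈ A, IsOpen (V (x i))) ∧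
      (∀ i ∈ A, x i ∈ V (x i)) ∧ (A.Nonempty → A.card ≤ k →
        ∀ y : Fin m → X, (∀ i ∈ A, y i ∈ V (x i)) → f (A.image y) ∈ O (f (A.image x))) := by
    intro A
    by_cases hA : A.Nonempty ∧ A.card ≤ k
    · obtain ⟨hne, hc⟩ := hA
      have hc' : (A.image x).card ≤ k := Finset.card_image_le.trans hc
      obtain ⟨V, h1, h2, -, h4⟩ := hcont (A.image x) (hne.image x) hc'
        (O (f (A.image x))) (hO _).2 (hO _).1
      refine ⟨V, fun i hi => h1 _ (Finset.mem_image_of_mem _ hi),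
        fun i hi => h2 _ (Finset.mem_image_of_mem _ hi), fun _ _ y hy => ?_⟩
      apply h4 _ (hne.image y) (Finset.card_image_le.trans hc)
      · intro z hz
        obtain ⟨i, hi, rfl⟩ := Finset.mem_image.1 (Finset.mem_coe.1 hz)
        exact Set.mem_biUnion (Finset.mem_image_of_mem x hi) (hy i hi)
      · intro z hz
        obtain ⟨i, hi, rfl⟩ := Finset.mem_image.1 hz
        exact ⟨y i, Finset.mem_image_of_mem _ hi, hy i hi⟩
    · exact ⟨fun _ => Set.univ, fun _ _ => isOpen_univ, fun _ _ => Set.mem_univ _,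
        fun h1 h2 => absurd ⟨h1, h2⟩ hA⟩
  choose V hV1 hV2 hV3 using step
  have hOd' : ∀ i j, i ≠ j → Disjoint (O (x i)) (O (x j)) := fun i j hij =>
    hOd ⟨i, rfl⟩ ⟨j, rfl⟩ (hx.ne hij)
  refine ⟨fun i => O (x i) ∩ ⋂ A : Finset (Fin m), ⋂ _ : i ∈ A, V A (x i), ?_, ?_, ?_, ?_⟩
  · intro i
    refine (hO _).2.inter (isOpen_iInter_of_finite fun A => isOpen_iInter_of_finite fun h => hV1 A i h)
  · intro i
    exact ⟨(hO _).1, Set.mem_iInter₂.2 fun A h => hV2 A i h⟩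
  · intro i j hij
    exact (hOd' i j hij).mono Set.inter_subset_left Set.inter_subset_left
  · intro y hy
    have hsame : ∀ i j, y i ∈ O (x j) → i = j := by
      intro i j h
      by_contra hij
      exact Set.disjoint_left.1 (hOd' i j hij) (hy i).1 h
    have hinj : Function.Injective y := fun i j h => hsame i j (h ▸ (hy j).1)
    refine ⟨hinj, fun A hne hc => ?_⟩
    obtain ⟨p, -, hp⟩ := Finset.mem_image.1
      (hsel (A.image x) (hne.image x) (Finset.card_image_le.trans hc))
    obtain ⟨q, -, hq⟩ := Finset.mem_image.1
      (hsel (A.image y) (hne.image y) (Finset.card_image_le.trans hc))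
    have hO' := hV3 A hne hc y fun i hi => Set.mem_iInter₂.1 (hy i).2 A hi
    rw [← hp, ← hq] at hO'
    have := hsame _ _ hO'
    subst this
    intro i
    rw [← hp, ← hq, hinj.eq_iff, hx.eq_iff]

/-- If `f` selects the same indices along `y` as along `x`, then `y` inherits membership of
`𝒫(g)` from `x`. -/
lemma mem_PClass_of_stable {X Y : Type*} [DecidableEq X] [DecidableEq Y] {n m : ℕ}
    [Nonempty (Fin m)]
    {f : Finset X → X} {g : Finset Y → Y} (hfn : ∀ A : Finset X, A.card = n → f A ∈ A)
    {x y : Fin m → X} (hx : Function.Injective x) (hy : Function.Injective y)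
    (hxy : ∀ A : Finset (Fin m), A.card = n → ∀ i, f (A.image y) = y i ↔ f (A.image x) = x i)
    (hs : Finset.univ.image x ∈ PClass n m f g) : Finset.univ.image y ∈ PClass n m f g := by
  obtain ⟨-, φ, hφ, hiso⟩ := hs
  have hinv : ∀ i, Function.invFun y (y i) = i := Function.leftInverse_invFun hy
  have hxm : ∀ i, x i ∈ ((Finset.univ.image x : Finset X) : Set X) := fun i => by simp
  refine ⟨by rw [Finset.card_image_of_injective _ hy]; simp,
    fun z => φ (x (Function.invFun y z)), ⟨fun _ _ => Set.mem_univ _, ?_, ?_⟩, ?_⟩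
  · intro a ha b hb h
    simp only [Finset.coe_image, Finset.coe_univ, Set.image_univ, Set.mem_range] at ha hb
    obtain ⟨i, rfl⟩ := ha
    obtain ⟨j, rfl⟩ := hb
    simp only [hinv] at h
    rw [hx (hφ.injOn (hxm i) (hxm j) h)]
  · intro b _
    obtain ⟨a, ha, rfl⟩ := hφ.surjOn (Set.mem_univ b)
    simp only [Finset.coe_image, Finset.coe_univ, Set.image_univ, Set.mem_range] at ha
    obtain ⟨i, rfl⟩ := ha
    exact ⟨y i, by simp, by simp only [hinv]⟩
  · intro A hA hc
    obtain ⟨B, -, rfl⟩ := Finset.subset_image_iff.1 hA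
    have hB : B.card = n := by rw [← hc, Finset.card_image_of_injective _ hy]
    obtain ⟨i, -, hi⟩ := Finset.mem_image.1 (hfn _ hc)
    have hi' := (hxy B hB i).1 hi.symm
    have h := hiso (B.image x) (Finset.image_subset_image (Finset.subset_univ _))
      (by rw [Finset.card_image_of_injective _ hx, hB])
    rw [← hi]
    simp only [hinv]
    rw [← hi', ← h, Finset.image_image, Finset.image_image]
    congr 1
    refine Finset.image_congr fun j _ => ?_
    simp [hinv]

/-- With `1 ≤ n ≤ k`, `m ≤ 2k`, `f` a continuous selection on `F_k(X)`,
`|Y| = m`, and `g` a selection on `n`-element subsets of `Y` whose in-degree function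
`W_g` is not constant, the class `𝒫(g)` admits a continuous selection. -/
theorem statement9 {X : Type*} [TopologicalSpace X] [T2Space X] [DecidableEq X]
    (k n m : ℕ) (hn : 1 ≤ n) (hnk : n ≤ k) (hmk : m ≤ 2 * k)
    (f : Finset X → X) (hf : ContSelOnLE k f)
    (Y : Type*) [Fintype Y] [DecidableEq Y] (hY : Fintype.card Y = m)
    (g : Finset Y → Y) (hg : ∀ A : Finset Y, A.card = n → g A ∈ A)
    (hW : ∃ x y : Y,
      Set.ncard {A : Finset Y | A.card = n ∧ g A = x} ≠
      Set.ncard {A : Finset Y | A.card = n ∧ g A = y}) :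
    ∃ h : Finset X → X,
      (∀ s ∈ PClass n m f g, h s ∈ s) ∧
      ∀ x : Fin m → X, Function.Injective x →
        Finset.image x Finset.univ ∈ PClass n m f g →
        ∃ U : Fin m → Set X,
          (∀ i, IsOpen (U i)) ∧ (∀ i, x i ∈ U i) ∧
          Pairwise (fun i j => Disjoint (U i) (U j)) ∧
          ∃ j : Fin m, ∀ y : Fin m → X, (∀ i, y i ∈ U i) →
            Finset.image y Finset.univ ∈ PClass n m f g ∧
            h (Finset.image y Finset.univ) ∈ U j := by
  classical
  obtain ⟨a, b, hab⟩ := hW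
  have hfn : ∀ A : Finset X, A.card = n → f A ∈ A := fun A hA =>
    hf.1 A (Finset.card_pos.1 (by omega)) (by omega)
  have hm : 0 < m := hY ▸ Fintype.card_pos_iff.2 ⟨a⟩
  have : Nonempty (Fin m) := ⟨⟨0, hm⟩⟩
  -- of the two disjoint level sets through `a` and `b`, one has at most `m / 2 ≤ k` points
  obtain ⟨c, hc0, hck⟩ : ∃ c : ℕ,
      0 < (Finset.univ.filter
        fun y : Y => Set.ncard {A : Finset Y | A.card = n ∧ g A = y} = c).card ∧
      (Finset.univ.filter
        fun y : Y => Set.ncard {A : Finset Y | A.card = n ∧ g A = y} = c).card ≤ k := by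
    set w : Y → ℕ := fun y => Set.ncard {A : Finset Y | A.card = n ∧ g A = y}
    have hd : Disjoint (Finset.univ.filter fun y => w y = w a)
        (Finset.univ.filter fun y => w y = w b) := by
      rw [Finset.disjoint_left]
      intro y h1 h2
      simp only [Finset.mem_filter, Finset.mem_univ, true_and] at h1 h2
      exact hab (h1.symm.trans h2)
    have hle := Finset.card_le_univ ((Finset.univ.filter fun y => w y = w a) ∪
        (Finset.univ.filter fun y => w y = w b))
    rw [Finset.card_union_of_disjoint hd, hY] at hle
    have hpos : ∀ z, 0 < (Finset.univ.filter fun y => w y = w z).card := fun z =>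
      Finset.card_pos.2 ⟨z, by simp⟩
    by_cases h : (Finset.univ.filter fun y => w y = w a).card ≤ k
    · exact ⟨w a, hpos a, h⟩
    · have hb : (Finset.univ.filter fun y => w y = w b).card ≤ k := by omega
      exact ⟨w b, hpos b, hb⟩
  refine ⟨fun s => f (degreeLevel n f c s), fun s hs => ?_, fun x hx hs => ?_⟩
  · have e := degreeLevel_of_mem_PClass hfn c hs
    exact Finset.filter_subset _ _
      (hf.1 (degreeLevel n f c s) (Finset.card_pos.1 (by omega)) (by omega))
  · obtain ⟨U, hUo, hxU, hUd, hU⟩ := exists_stable_nhds hf x hx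
    have e := degreeLevel_of_mem_PClass hfn c hs
    rw [degreeLevel_image n f c x hx, Finset.card_image_of_injective _ hx] at e
    have hne : (indexLevel n f c x).Nonempty := Finset.card_pos.1 (by omega)
    have hcard : (indexLevel n f c x).card ≤ k := by omega
    obtain ⟨j, -, hj⟩ := Finset.mem_image.1
      (hf.1 _ (hne.image x) (Finset.card_image_le.trans hcard))
    refine ⟨U, hUo, hxU, hUd, j, fun y hyU => ?_⟩
    obtain ⟨hy, hxy⟩ := hU y hyU
    have hxy' : ∀ A : Finset (Fin m), A.card = n →
        ∀ i, f (A.image y) = y i ↔ f (A.image x) = x i := fun A hA =>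
      hxy A (Finset.card_pos.1 (by omega)) (by omega)
    refine ⟨mem_PClass_of_stable hfn hx hy hxy' hs, ?_⟩
    have hlev : indexLevel n f c y = indexLevel n f c x := by
      unfold indexLevel
      refine Finset.filter_congr fun i _ => ?_
      rw [Finset.filter_congr fun A hA => hxy' A (Finset.mem_powersetCard.1 hA).2 i]
    show f (degreeLevel n f c (Finset.univ.image y)) ∈ U j
    rw [degreeLevel_image n f c y hy, hlev, (hxy _ hne hcard j).2 hj.symm]
    exact hyU j
end

section
/- Let X be a Hausdorff topological space, n ≥ 2 an even natural number, and f a continuous selection on [X]^2. Let 𝒰 and 𝒱 be families of n+1 pairwise disjoint nonempty open subsets of X, each of which preserves f-relations, i.e., for any two distinct members W, W' of the family there is one of them, say W'', such that f({x, y}) ∈ W'' for all x ∈ W and y ∈ W'. Suppose ⟨𝒰⟩ ⊆ 𝒫(Reg_{n+1}) and ⟨𝒱⟩ ⊆ 𝒫(Reg_{n+1}), where ⟨𝒲⟩ denotes the set of (n+1)-element subsets of X contained in the union of 𝒲 and meeting every member of 𝒲, and 𝒫(Reg_{n+1}) is the set of (n+1)-element subsets s of X such that the number |{A ∈ [s]^2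 : f(A) = x}| is the same for all x ∈ s. If ⟨𝒰⟩ ∩ ⟨𝒱⟩ ≠ ∅, then for every U ∈ 𝒰 there exists exactly one V ∈ 𝒱 with U ∩ V ≠ ∅. -/
/-- `𝒫(Reg_m)`: the `m`-element subsets `s` of `X` such that the number of `2`-element
subsets of `s` that `f` sends to `x` is the same for all `x ∈ s`. -/
def PReg {X : Type*} (m : ℕ) (f : Finset X → X) : Set (Finset X) :=
  {s | s.card = m ∧ ∀ x ∈ s, ∀ y ∈ s,
    Set.ncard {A : Finset X | A ⊆ s ∧ A.card = 2 ∧ f A = x} =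
    Set.ncard {A : Finset X | A ⊆ s ∧ A.card = 2 ∧ f A = y}}

/-- `⟨𝒰⟩` for a family `U` of `m` sets: the `m`-element subsets of `X` contained in the
union of the family and meeting each of its members. -/
def HypFn {X : Type*} (m : ℕ) (U : Fin m → Set X) : Set (Finset X) :=
  {s | s.card = m ∧ (↑s : Set X) ⊆ ⋃ i, U i ∧ ∀ i, ∃ x ∈ s, x ∈ U i}

/-- The number of pairs in `s` sent to `x` is the score of `x` in the tournament on `s`. -/
lemma ncard_pairs_eq_score {X : Type*} [DecidableEq X] {f : Finset X → X} (hf : SelOn 2 f)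
    {s : Finset X} {x : X} (hx : x ∈ s) :
    Set.ncard {A : Finset X | A ⊆ s ∧ A.card = 2 ∧ f A = x} =
      (s.filter fun k => k ≠ x ∧ f {x, k} = x).card := by
  have himage : {A : Finset X | A ⊆ s ∧ A.card = 2 ∧ f A = x} =
      (fun k => ({x, k} : Finset X)) '' ↑(s.filter fun k => k ≠ x ∧ f {x, k} = x) := by
    ext A
    simp only [Set.mem_ofPred_eq, Set.mem_image, Finset.coe_filter]
    constructor
    · rintro ⟨hAs, hA, hfA⟩
      have hxA : x ∈ A := hfA ▸ hf A hA
      obtain ⟨a, b, hab, rfl⟩ := Finset.card_eq_two.mp hA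
      rw [Finset.insert_subset_iff, Finset.singleton_subset_iff] at hAs
      rw [Finset.mem_insert, Finset.mem_singleton] at hxA
      rcases hxA with rfl | rfl
      · exact ⟨b, ⟨hAs.2, hab.symm, hfA⟩, rfl⟩
      · exact ⟨a, ⟨hAs.1, hab, by rwa [Finset.pair_comm]⟩, Finset.pair_comm _ _⟩
    · rintro ⟨k, ⟨hk, hkx, hfk⟩, rfl⟩
      refine ⟨?_, Finset.card_pair hkx.symm, hfk⟩
      rw [Finset.insert_subset_iff, Finset.singleton_subset_iff]
      exact ⟨hx, hk⟩
  rw [himage, Set.InjOn.ncard_image, Set.ncard_coe_finset]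
  intro a ha b hb hab
  have hmem : a ∈ ({x, b} : Finset X) := by
    have hab' : ({x, a} : Finset X) = {x, b} := hab
    rw [← hab']
    simp
  simp only [Finset.coe_filter, Set.mem_ofPred_eq] at ha
  simpa [ha.2.1] using hmem

lemma score_lt_of_beats {X : Type*} [DecidableEq X] {f : Finset X → X}
    {s : Finset X} {x y : X} (hy : y ∈ s) (hxy : x ≠ y) (hbeat : f {x, y} = x)
    (h : ∀ k ∈ s, k ≠ x → k ≠ y → f {y, k} = y → f {x, k} = x) :
    (s.filter fun k => k ≠ y ∧ f {y, k} = y).card <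
      (s.filter fun k => k ≠ x ∧ f {x, k} = x).card := by
  apply Finset.card_lt_card
  rw [Finset.ssubset_iff_of_subset]
  · exact ⟨y, by simp [hy, hxy.symm, hbeat], by simp⟩
  · intro k hk
    rw [Finset.mem_filter] at hk ⊢
    have hkx : k ≠ x := by
      rintro rfl
      exact hxy (hbeat.symm.trans (by rw [Finset.pair_comm]; exact hk.2.2))
    exact ⟨hk.1, hkx, h k hk.1 hkx hk.2.1 hk.2.2⟩

/-- A regular tournament has no two distinct vertices with the same relations to all others. -/
lemma not_twins {X : Type*} [DecidableEq X] {m : ℕ} {f : Finset X → X} (hf : SelOn 2 f)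
    {s : Finset X} (hs : s ∈ PReg m f) {x y : X} (hx : x ∈ s) (hy : y ∈ s) (hxy : x ≠ y)
    (h : ∀ k ∈ s, k ≠ x → k ≠ y → (f {x, k} = x ↔ f {y, k} = y)) : False := by
  have heq := hs.2 x hx y hy
  rw [ncard_pairs_eq_score hf hx, ncard_pairs_eq_score hf hy] at heq
  have hmem := hf {x, y} (Finset.card_pair hxy)
  rw [Finset.mem_insert, Finset.mem_singleton] at hmem
  rcases hmem with hb | hb
  · have := score_lt_of_beats hy hxy hb fun k hk hkx hky => (h k hk hkx hky).2
    omega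
  · have := score_lt_of_beats hx hxy.symm (by rwa [Finset.pair_comm])
      fun k hk hky hkx => (h k hk hkx hky).1
    omega

/-- A member of `⟨U⟩` has only one point in each `U i`, since it has as many points as `U` has
members. -/
lemma eq_of_mem_hypFn {X : Type*} {m : ℕ} {U : Fin m → Set X}
    (hUd : Pairwise (fun i j => Disjoint (U i) (U j))) {s : Finset X} (hs : s ∈ HypFn m U)
    {i : Fin m} {x y : X} (hx : x ∈ s) (hy : y ∈ s) (hxU : x ∈ U i) (hyU : y ∈ U i) : x = y := by
  obtain ⟨hcard, -, hmeets⟩ := hs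
  choose t hts htU using hmeets
  have huniq : ∀ {a b : Fin m} {p : X}, p ∈ U a → p ∈ U b → a = b := by
    intro a b p ha hb
    by_contra hab
    exact Set.disjoint_left.mp (hUd hab) ha hb
  have hinj : Function.Injective fun a => (⟨t a, hts a⟩ : s) := by
    intro a b hab
    have htab : t a = t b := congrArg Subtype.val hab
    exact huniq (htU a) (htab ▸ htU b)
  have hsurj := ((Fintype.bijective_iff_injective_and_card _).2 ⟨hinj, by simp [hcard]⟩).2
  obtain ⟨a, ha⟩ := hsurj ⟨x, hx⟩
  obtain ⟨b, hb⟩ := hsurj ⟨y, hy⟩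
  have ha' : t a = x := congrArg Subtype.val ha
  have hb' : t b = y := congrArg Subtype.val hb
  have hai : a = i := huniq (htU a) (ha' ▸ hxU)
  have hbi : b = i := huniq (htU b) (hb' ▸ hyU)
  rw [← ha', ← hb', hai, hbi]

/-- In a family preserving `f`-relations, two points of one member are related in the same way to
any point of another member. -/
lemma beats_iff_of_mem {X : Type*} [DecidableEq X] {m : ℕ} {f : Finset X → X} (hf : SelOn 2 f)
    {U : Fin m → Set X} (hUd : Pairwise (fun i j => Disjoint (U i) (U j)))
    (hUrel : ∀ i j, i ≠ j →
      (∀ x ∈ U i, ∀ y ∈ U j, f {x, y} ∈ U i) ∨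
      (∀ x ∈ U i, ∀ y ∈ U j, f {x, y} ∈ U j))
    {i j : Fin m} (hij : i ≠ j) {x z k : X} (hx : x ∈ U i) (hz : z ∈ U i) (hk : k ∈ U j) :
    f {x, k} = x ↔ f {z, k} = z := by
  have hmem : ∀ {p : X}, p ∈ U i → (f {p, k} = p ↔ f {p, k} ∈ U i) := by
    intro p hp
    have hpk : p ≠ k := by
      rintro rfl
      exact Set.disjoint_left.mp (hUd hij) hp hk
    have hsel := hf {p, k} (Finset.card_pair hpk)
    rw [Finset.mem_insert, Finset.mem_singleton] at hsel
    refine ⟨fun h => h.symm ▸ hp, fun h => hsel.resolve_right fun hfk => ?_⟩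
    exact Set.disjoint_left.mp (hUd hij) h (hfk.symm ▸ hk)
  rw [hmem hx, hmem hz]
  rcases hUrel i j hij with h | h
  · exact iff_of_true (h x hx k hk) (h z hz k hk)
  · exact iff_of_false (fun h' => Set.disjoint_left.mp (hUd hij) h' (h x hx k hk))
      (fun h' => Set.disjoint_left.mp (hUd hij) h' (h z hz k hk))

/-- Let `n ≥ 2` be even and `f` a continuous selection on `[X]^2`. If
`𝒰, 𝒱` are families of `n+1` pairwise disjoint nonempty open sets, each preserving
`f`-relations, with `⟨𝒰⟩, ⟨𝒱⟩ ⊆ 𝒫(Reg_{n+1})` and `⟨𝒰⟩ ∩ ⟨𝒱⟩ ≠ ∅`, then every member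
of `𝒰` meets exactly one member of `𝒱`. -/
theorem statement11 {X : Type*} [TopologicalSpace X] [T2Space X] [DecidableEq X]
    (n : ℕ) (hn : 2 ≤ n) (hev : Even n)
    (f : Finset X → X) (hf : ContSelOn 2 f)
    (U V : Fin (n + 1) → Set X)
    (hUo : ∀ i, IsOpen (U i)) (hUne : ∀ i, (U i).Nonempty)
    (hUd : Pairwise (fun i j => Disjoint (U i) (U j)))
    (hVo : ∀ i, IsOpen (V i)) (hVne : ∀ i, (V i).Nonempty)
    (hVd : Pairwise (fun i j => Disjoint (V i) (V j)))
    (hUrel : ∀ i j, i ≠ j →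
      (∀ x ∈ U i, ∀ y ∈ U j, f {x, y} ∈ U i) ∨
      (∀ x ∈ U i, ∀ y ∈ U j, f {x, y} ∈ U j))
    (hVrel : ∀ i j, i ≠ j →
      (∀ x ∈ V i, ∀ y ∈ V j, f {x, y} ∈ V i) ∨
      (∀ x ∈ V i, ∀ y ∈ V j, f {x, y} ∈ V j))
    (hUP : HypFn (n + 1) U ⊆ PReg (n + 1) f)
    (hVP : HypFn (n + 1) V ⊆ PReg (n + 1) f)
    (hmeet : (HypFn (n + 1) U ∩ HypFn (n + 1) V).Nonempty) :
    ∀ i : Fin (n + 1), ∃! j : Fin (n + 1), (U i ∩ V j).Nonempty := by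
  intro i
  obtain ⟨s, hsU, hsV⟩ := hmeet
  obtain ⟨x, hxs, hxU⟩ := hsU.2.2 i
  obtain ⟨j₀, hxV⟩ := Set.mem_iUnion.mp (hsV.2.1 hxs)
  refine ⟨j₀, ⟨x, hxU, hxV⟩, ?_⟩
  rintro j ⟨z, hzU, hzV⟩
  by_contra hj
  obtain ⟨y, hys, hyV⟩ := hsV.2.2 j
  have hxy : x ≠ y := by
    rintro rfl
    exact Set.disjoint_left.mp (hVd hj) hyV hxV
  refine not_twins hf.1 (hUP hsU) hxs hys hxy fun k hks hkx hky => ?_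
  obtain ⟨a, hka⟩ := Set.mem_iUnion.mp (hsU.2.1 hks)
  obtain ⟨b, hkb⟩ := Set.mem_iUnion.mp (hsV.2.1 hks)
  have hia : i ≠ a := by
    rintro rfl
    exact hkx (eq_of_mem_hypFn hUd hsU hks hxs hka hxU)
  have hjb : j ≠ b := by
    rintro rfl
    exact hky (eq_of_mem_hypFn hVd hsV hks hys hkb hyV)
  exact (beats_iff_of_mem hf.1 hUd hUrel hia hxU hzU hka).trans
    (beats_iff_of_mem hf.1 hVd hVrel hjb hyV hzV hkb).symm
end
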